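/- arXiv:2205.11494 — 3 statements merged into one kernel-verified Lean document; each statement's English description precedes it below -/
import Mathlib

section
/- Let (▷,σ) be a cocycle datum for a Hopf algebra H on an algebra B, and equip B⊗B⊗H with the cocycle Hopf algebroid product. Then the counit ε_L(b⊗b'⊗h) := b(h_{(1)}▷b')σ(h_{(2)}, S(h_{(3)})) is a left character: ε_L(1⊗1⊗1) = 1, ε_L(s(c)X) = c·ε_L(X), and ε_L(X·s(ε_L(Y))) = ε_L(XY) = ε_L(X·t(ε_L(Y))) for all X,Y ∈ B⊗B⊗H and c ∈ B. -/
/-!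
The proof replaces Sweedler calculus by matrix calculus. Over a field, every element of `H` is a
linear combination of entries of comatrices (`exists_comatrix`), that is, finite matrices with
`Δ c_{ij} = ∑ₗ c_{il} ⊗ c_{lj}` and `ε c_{ij} = δ_{ij}`. On such entries an iterated coproduct is an
explicit sum over intermediate indices, coassociativity is automatic, and comatrices are stable
under products `c_{ij} d_{pq}` and under `c ↦ S(c)ᵀ` (`IsComatrix.prod`, `IsComatrix.antipode`).

Write `τ(h) = σ(h₍₁₎, S(h₍₂₎))`, so that `ε_L(a ⊗ a' ⊗ h) = a (h₍₁₎ ▷ a') τ(h₍₂₎)`. For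
`X = a ⊗ a' ⊗ h`, both `ε_L(X s(y))` and `ε_L(X t(y))` are readily seen to be
`a (h₍₁₎ ▷ (y a')) τ(h₍₂₎)`, so the point is that `ε_L(X Y)` is this expression at `y = ε_L(Y)`
(`mat_eps_mul`). This rests on `CocycleDatum.mat_key`, whose ingredients are:

* the exchange rule `(h₍₁₎ ▷ (g₍₁₎ ▷ b)) σ(h₍₂₎, g₍₂₎) = σ(h₍₁₎, g₍₁₎) (h₍₂₎g₍₂₎ ▷ b)`
  (`CocycleDatum.mat_exchange`), and its consequence
  `(g₍₁₎ ▷ (S(g₍₃₎) ▷ b)) τ(g₍₂₎) = τ(g) b` (`CocycleDatum.mat_tau_conj`);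
* two applications of the cocycle identity, to `(hg, S(g), S(h))` and to `(h, g, S(g))`, in which
  the antipode axiom collapses the inner legs (`CocycleDatum.mat_collapse`,
  `CocycleDatum.mat_collapse'`).
-/

open scoped TensorProduct
open Coalgebra

noncomputable section

section SweedlerDefs

variable (k : Type*) [Field k]
variable (H : Type*) [Ring H] [Bialgebra k H]

/-- Left-nested triple comultiplication `h ↦ (h₍₁₎ ⊗ h₍₂₎) ⊗ h₍₃₎`. -/
def Δ3 : H →ₗ[k] (H ⊗[k] H) ⊗[k] H :=
  (LinearMap.rTensor H (Coalgebra.comul (R := k) (A := H))) ∘ₗ Coalgebra.comul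

/-- Left-nested fourfold comultiplication. -/
def Δ4 : H →ₗ[k] ((H ⊗[k] H) ⊗[k] H) ⊗[k] H :=
  (LinearMap.rTensor H (Δ3 k H)) ∘ₗ Coalgebra.comul

/-- Left-nested fivefold comultiplication. -/
def Δ5 : H →ₗ[k] (((H ⊗[k] H) ⊗[k] H) ⊗[k] H) ⊗[k] H :=
  (LinearMap.rTensor H (Δ4 k H)) ∘ₗ Coalgebra.comul

/-- Left-nested sixfold comultiplication. -/
def Δ6 : H →ₗ[k] ((((H ⊗[k] H) ⊗[k] H) ⊗[k] H) ⊗[k] H) ⊗[k] H :=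
  (LinearMap.rTensor H (Δ5 k H)) ∘ₗ Coalgebra.comul

/-- `IsRep2 k H h h1 h2` says that `Δh = ∑ᵢ h1 i ⊗ h2 i`, i.e. the families `h1, h2`
realise the Sweedler legs `h₍₁₎ ⊗ h₍₂₎`. -/
def IsRep2 {n : ℕ} (h : H) (h1 h2 : Fin n → H) : Prop :=
  Coalgebra.comul (R := k) h = ∑ i, h1 i ⊗ₜ[k] h2 i

/-- A representation of the Sweedler legs `h₍₁₎ ⊗ h₍₂₎ ⊗ h₍₃₎`. -/
def IsRep3 {n : ℕ} (h : H) (h1 h2 h3 : Fin n → H) : Prop :=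
  Δ3 k H h = ∑ i, (h1 i ⊗ₜ[k] h2 i) ⊗ₜ[k] h3 i

/-- A representation of the Sweedler legs `h₍₁₎ ⊗ h₍₂₎ ⊗ h₍₃₎ ⊗ h₍₄₎`. -/
def IsRep4 {n : ℕ} (h : H) (h1 h2 h3 h4 : Fin n → H) : Prop :=
  Δ4 k H h = ∑ i, ((h1 i ⊗ₜ[k] h2 i) ⊗ₜ[k] h3 i) ⊗ₜ[k] h4 i

/-- A representation of the Sweedler legs `h₍₁₎ ⊗ ⋯ ⊗ h₍₅₎`. -/
def IsRep5 {n : ℕ} (h : H) (h1 h2 h3 h4 h5 : Fin n → H) : Prop :=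
  Δ5 k H h = ∑ i, (((h1 i ⊗ₜ[k] h2 i) ⊗ₜ[k] h3 i) ⊗ₜ[k] h4 i) ⊗ₜ[k] h5 i

/-- A representation of the Sweedler legs `h₍₁₎ ⊗ ⋯ ⊗ h₍₆₎`. -/
def IsRep6 {n : ℕ} (h : H) (h1 h2 h3 h4 h5 h6 : Fin n → H) : Prop :=
  Δ6 k H h = ∑ i, ((((h1 i ⊗ₜ[k] h2 i) ⊗ₜ[k] h3 i) ⊗ₜ[k] h4 i) ⊗ₜ[k] h5 i) ⊗ₜ[k] h6 i

/-- A Drinfeld 2-cocycle `χ : H ⊗ H → k` with convolution inverse `χi`. -/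
structure DrinfeldCocycle (χ χi : H →ₗ[k] H →ₗ[k] k) : Prop where
  conv_left : ∀ (h g : H) {n m : ℕ} (h1 h2 : Fin n → H) (g1 g2 : Fin m → H),
    IsRep2 k H h h1 h2 → IsRep2 k H g g1 g2 →
    ∑ i, ∑ j, χ (h1 i) (g1 j) * χi (h2 i) (g2 j)
      = Coalgebra.counit (R := k) h * Coalgebra.counit (R := k) g
  conv_right : ∀ (h g : H) {n m : ℕ} (h1 h2 : Fin n → H) (g1 g2 : Fin m → H),
    IsRep2 k H h h1 h2 → IsRep2 k H g g1 g2 →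
    ∑ i, ∑ j, χi (h1 i) (g1 j) * χ (h2 i) (g2 j)
      = Coalgebra.counit (R := k) h * Coalgebra.counit (R := k) g
  cocycle : ∀ (h g f : H) {n m p : ℕ} (h1 h2 : Fin n → H) (g1 g2 : Fin m → H)
      (f1 f2 : Fin p → H),
    IsRep2 k H h h1 h2 → IsRep2 k H g g1 g2 → IsRep2 k H f f1 f2 →
    ∑ j, ∑ l, χ (g1 j) (f1 l) * χ h (g2 j * f2 l)
      = ∑ i, ∑ j, χ (h1 i) (g1 j) * χ (h2 i * g2 j) f
  one_cocy : ∀ h : H, χ 1 h = Coalgebra.counit (R := k) h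
  cocy_one : ∀ h : H, χ h 1 = Coalgebra.counit (R := k) h

/-- The twisted product `h • g = χ(h₍₁₎,g₍₁₎) h₍₂₎g₍₂₎ χ⁻¹(h₍₃₎,g₍₃₎)` of the Drinfeld
cotwist `H^χ`, given as a bilinear map `tmul`. -/
def IsTwistedMul (χ χi : H →ₗ[k] H →ₗ[k] k) (tmul : H →ₗ[k] H →ₗ[k] H) : Prop :=
  ∀ (h g : H) {n m : ℕ} (h1 h2 h3 : Fin n → H) (g1 g2 g3 : Fin m → H),
    IsRep3 k H h h1 h2 h3 → IsRep3 k H g g1 g2 g3 →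
    tmul h g = ∑ i, ∑ j, (χ (h1 i) (g1 j) * χi (h3 i) (g3 j)) • (h2 i * g2 j)

/-- A coquasitriangular structure `r` on `H`, with convolution inverse `ri`. -/
structure Coquasitriangular (r ri : H →ₗ[k] H →ₗ[k] k) : Prop where
  conv_left : ∀ (h g : H) {n m : ℕ} (h1 h2 : Fin n → H) (g1 g2 : Fin m → H),
    IsRep2 k H h h1 h2 → IsRep2 k H g g1 g2 →
    ∑ i, ∑ j, r (h1 i) (g1 j) * ri (h2 i) (g2 j)
      = Coalgebra.counit (R := k) h * Coalgebra.counit (R := k) g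
  conv_right : ∀ (h g : H) {n m : ℕ} (h1 h2 : Fin n → H) (g1 g2 : Fin m → H),
    IsRep2 k H h h1 h2 → IsRep2 k H g g1 g2 →
    ∑ i, ∑ j, ri (h1 i) (g1 j) * r (h2 i) (g2 j)
      = Coalgebra.counit (R := k) h * Coalgebra.counit (R := k) g
  braid : ∀ (h g : H) {n m : ℕ} (h1 h2 : Fin n → H) (g1 g2 : Fin m → H),
    IsRep2 k H h h1 h2 → IsRep2 k H g g1 g2 →
    ∑ i, ∑ j, r (h2 i) (g2 j) • (g1 j * h1 i) = ∑ i, ∑ j, r (h1 i) (g1 j) • (h2 i * g2 j)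
  mul_right : ∀ (h g f : H) {n : ℕ} (h1 h2 : Fin n → H), IsRep2 k H h h1 h2 →
    r h (g * f) = ∑ i, r (h1 i) g * r (h2 i) f
  mul_left : ∀ (h g f : H) {n : ℕ} (f1 f2 : Fin n → H), IsRep2 k H f f1 f2 →
    r (h * g) f = ∑ i, r h (f1 i) * r g (f2 i)

variable (B : Type*) [Ring B] [Algebra k B]

/-- `u, ui : H → B` are convolution inverses of each other. -/
def ConvInv (u ui : H →ₗ[k] B) : Prop :=
  ∀ (h : H) {n : ℕ} (h1 h2 : Fin n → H), IsRep2 k H h h1 h2 →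
    ∑ i, u (h1 i) * ui (h2 i) = Coalgebra.counit (R := k) h • (1 : B)
    ∧ ∑ i, ui (h1 i) * u (h2 i) = Coalgebra.counit (R := k) h • (1 : B)

/-- A measuring of `H` on `B`:  `h ▷ (ab) = (h₍₁₎ ▷ a)(h₍₂₎ ▷ b)` and `h ▷ 1 = ε(h)1`. -/
structure Measuring (act : H →ₗ[k] B →ₗ[k] B) : Prop where
  act_mul : ∀ (h : H) (a b : B) {n : ℕ} (h1 h2 : Fin n → H),
    IsRep2 k H h h1 h2 → act h (a * b) = ∑ i, act (h1 i) a * act (h2 i) b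
  act_one : ∀ h : H, act h 1 = Coalgebra.counit (R := k) h • (1 : B)

/-- A cocycle datum `(▷, σ)` (with chosen convolution inverse `σi` of `σ`). -/
structure CocycleDatum (act : H →ₗ[k] B →ₗ[k] B) (σ σi : H →ₗ[k] H →ₗ[k] B) : Prop where
  toMeasuring : Measuring k H B act
  conv_left : ∀ (h g : H) {n m : ℕ} (h1 h2 : Fin n → H) (g1 g2 : Fin m → H),
    IsRep2 k H h h1 h2 → IsRep2 k H g g1 g2 →
    ∑ i, ∑ j, σ (h1 i) (g1 j) * σi (h2 i) (g2 j)
      = (Coalgebra.counit (R := k) h * Coalgebra.counit (R := k) g) • (1 : B)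
  conv_right : ∀ (h g : H) {n m : ℕ} (h1 h2 : Fin n → H) (g1 g2 : Fin m → H),
    IsRep2 k H h h1 h2 → IsRep2 k H g g1 g2 →
    ∑ i, ∑ j, σi (h1 i) (g1 j) * σ (h2 i) (g2 j)
      = (Coalgebra.counit (R := k) h * Coalgebra.counit (R := k) g) • (1 : B)
  one_act : ∀ b : B, act 1 b = b
  act_act : ∀ (h g : H) (b : B) {n m : ℕ} (h1 h2 h3 : Fin n → H) (g1 g2 g3 : Fin m → H),
    IsRep3 k H h h1 h2 h3 → IsRep3 k H g g1 g2 g3 →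
    act h (act g b) = ∑ i, ∑ j, σ (h1 i) (g1 j) * act (h2 i * g2 j) b * σi (h3 i) (g3 j)
  sigma_one : ∀ h : H, σ h 1 = Coalgebra.counit (R := k) h • (1 : B)
  one_sigma : ∀ h : H, σ 1 h = Coalgebra.counit (R := k) h • (1 : B)
  cocycle : ∀ (h g f : H) {n m p : ℕ} (h1 h2 : Fin n → H) (g1 g2 : Fin m → H)
      (f1 f2 : Fin p → H),
    IsRep2 k H h h1 h2 → IsRep2 k H g g1 g2 → IsRep2 k H f f1 f2 →
    ∑ i, ∑ j, ∑ l, act (h1 i) (σ (g1 j) (f1 l)) * σ (h2 i) (g2 j * f2 l)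
      = ∑ i, ∑ j, σ (h1 i) (g1 j) * σ (h2 i * g2 j) f

/-- The cocycle cross product multiplication on `P = B ⊗ H`:
`(b#h)(c#g) = b(h₍₁₎▷c)σ(h₍₂₎,g₍₁₎) # h₍₃₎g₍₂₎`, given as a bilinear map `mult`. -/
def IsCrossMul (act : H →ₗ[k] B →ₗ[k] B) (σ : H →ₗ[k] H →ₗ[k] B)
    (mult : B ⊗[k] H →ₗ[k] B ⊗[k] H →ₗ[k] B ⊗[k] H) : Prop :=
  ∀ (b c : B) (h g : H) {n m : ℕ} (h1 h2 h3 : Fin n → H) (g1 g2 : Fin m → H),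
    IsRep3 k H h h1 h2 h3 → IsRep2 k H g g1 g2 →
    mult (b ⊗ₜ[k] h) (c ⊗ₜ[k] g)
      = ∑ i, ∑ j, (b * act (h1 i) c * σ (h2 i) (g1 j)) ⊗ₜ[k] (h3 i * g2 j)

end SweedlerDefs

section HopfDefs

variable (k : Type*) [Field k]
variable (H : Type*) [Ring H] [HopfAlgebra k H]
variable (B : Type*) [Ring B] [Algebra k B]

/-- The cocycle Hopf algebroid multiplication on `B ⊗ B ⊗ H`:
`(b⊗b'⊗h)(c⊗c'⊗g) = b(h₍₁₎▷c)σ(h₍₂₎,g₍₁₎) ⊗ c'(S(g₍₄₎)▷b')σ(S(g₍₃₎),S(h₍₄₎)) ⊗ h₍₃₎g₍₂₎`,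
given as a bilinear map `mult`. -/
def IsAlgebroidMul (act : H →ₗ[k] B →ₗ[k] B) (σ : H →ₗ[k] H →ₗ[k] B)
    (mult : B ⊗[k] (B ⊗[k] H) →ₗ[k] B ⊗[k] (B ⊗[k] H) →ₗ[k] B ⊗[k] (B ⊗[k] H)) : Prop :=
  ∀ (b b' c c' : B) (h g : H) {n m : ℕ}
    (h1 h2 h3 h4 : Fin n → H) (g1 g2 g3 g4 : Fin m → H),
    IsRep4 k H h h1 h2 h3 h4 → IsRep4 k H g g1 g2 g3 g4 →
    mult (b ⊗ₜ[k] (b' ⊗ₜ[k] h)) (c ⊗ₜ[k] (c' ⊗ₜ[k] g))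
      = ∑ i, ∑ j, (b * act (h1 i) c * σ (h2 i) (g1 j)) ⊗ₜ[k]
          ((c' * act (HopfAlgebra.antipode (R := k) (g4 j)) b'
              * σ (HopfAlgebra.antipode (R := k) (g3 j))
                  (HopfAlgebra.antipode (R := k) (h4 i))) ⊗ₜ[k] (h3 i * g2 j))

end HopfDefs

/-! ### Comatrices -/

section Comatrix

variable {k : Type*} [Field k]

/-- A finite square matrix `c` of elements of a bialgebra is a comatrix if
`Δ c_{ij} = ∑ₗ c_{il} ⊗ c_{lj}` and `ε c_{ij} = δ_{ij}`. -/
structure IsComatrix (k : Type*) [Field k] {H : Type*} [Ring H] [Bialgebra k H]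
    {I : Type*} [Fintype I] [DecidableEq I] (c : I → I → H) : Prop where
  comul : ∀ i j, Coalgebra.comul (R := k) (c i j) = ∑ l, c i l ⊗ₜ[k] c l j
  counit : ∀ i j, Coalgebra.counit (R := k) (c i j) = if i = j then 1 else 0

section Bialg

variable {H : Type*} [Ring H] [Bialgebra k H]
variable {I J : Type*} [Fintype I] [DecidableEq I] [Fintype J] [DecidableEq J]

theorem IsComatrix.prod {c : I → I → H} {d : J → J → H}
    (hc : IsComatrix k c) (hd : IsComatrix k d) :
    IsComatrix k (fun α β : I × J => c α.1 β.1 * d α.2 β.2) where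
  comul α β := by
    simp only [Bialgebra.comul_mul, hc.comul, hd.comul, Finset.sum_mul_sum,
      Algebra.TensorProduct.tmul_mul_tmul, Fintype.sum_prod_type]
  counit α β := by
    obtain ⟨a, b⟩ := α
    obtain ⟨a', b'⟩ := β
    simp only [Bialgebra.counit_mul, hc.counit, hd.counit, Prod.mk.injEq]
    split_ifs <;> simp_all

theorem IsComatrix.one : IsComatrix k (fun _ _ : Unit => (1 : H)) where
  comul _ _ := by simp [Algebra.TensorProduct.one_def]
  counit _ _ := by simp

theorem IsComatrix.rep3 {c : I → I → H} (hc : IsComatrix k c) (i j : I) :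
    Δ3 k H (c i j) = ∑ l, ∑ m, (c i l ⊗ₜ[k] c l m) ⊗ₜ[k] c m j := by
  simp only [Δ3, LinearMap.comp_apply, hc.comul, map_sum, LinearMap.rTensor_tmul,
    TensorProduct.sum_tmul]
  rw [Finset.sum_comm]

theorem IsComatrix.rep4 {c : I → I → H} (hc : IsComatrix k c) (i j : I) :
    Δ4 k H (c i j) = ∑ l, ∑ m, ∑ r, ((c i l ⊗ₜ[k] c l m) ⊗ₜ[k] c m r) ⊗ₜ[k] c r j := by
  simp only [Δ4, LinearMap.comp_apply, hc.comul, map_sum, LinearMap.rTensor_tmul,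
    hc.rep3, TensorProduct.sum_tmul]
  rw [Finset.sum_comm]
  exact Finset.sum_congr rfl fun _ _ => Finset.sum_comm

/-- Tensors can be compared coefficientwise along a family `w` with dual functionals `φ`. -/
theorem tmul_right_cancel {M N ι : Type*} [AddCommGroup M] [Module k M] [AddCommGroup N]
    [Module k N] [Fintype ι] [DecidableEq ι] (w : ι → N) (φ : ι → N →ₗ[k] k)
    (hφ : ∀ i j, φ i (w j) = if j = i then 1 else 0) (a b : ι → M)
    (hab : ∑ i, a i ⊗ₜ[k] w i = ∑ i, b i ⊗ₜ[k] w i) : a = b := by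
  funext i
  have := congrArg (fun z => TensorProduct.rid k M (LinearMap.lTensor M (φ i) z)) hab
  simpa [hφ] using this

/-- `H` is spanned by the entries of comatrices. The left legs of `Δ h` being expanded in a basis
`e` of `H`, the right legs `t` span a finite-dimensional space `V ∋ h` with `Δ V ⊆ H ⊗ V`; the
comatrix consists of the coefficients of `Δ` on a basis of `V`. -/
theorem exists_comatrix (h : H) : ∃ (n : ℕ) (c : Fin n → Fin n → H), IsComatrix k c ∧
    h ∈ Submodule.span k (Set.range fun α : Fin n × Fin n => c α.1 α.2) := by
  classical
  let e := Module.Basis.ofVectorSpace k H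
  let t := TensorProduct.equivFinsuppOfBasisLeft (N := H) e (comul (R := k) h)
  have ht : comul (R := k) h = ∑ i ∈ t.support, e i ⊗ₜ[k] t i := by
    rw [← (TensorProduct.equivFinsuppOfBasisLeft (N := H) e).symm_apply_apply (comul (R := k) h),
      TensorProduct.equivFinsuppOfBasisLeft_symm_apply]
    rfl
  let V : Submodule k H := Submodule.span k (t '' t.support)
  have hV : FiniteDimensional k V :=
    FiniteDimensional.span_of_finite k (t.support.finite_toSet.image _)
  have htV : ∀ i ∈ t.support, t i ∈ V := fun i hi => Submodule.subset_span ⟨i, hi, rfl⟩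
  have hhV : h ∈ V := by
    have := congrArg (TensorProduct.lid k H) (Coalgebra.rTensor_counit_comul (R := k) h)
    rw [ht] at this
    simp only [map_sum, LinearMap.rTensor_tmul, TensorProduct.lid_tmul, one_smul] at this
    rw [← this]
    exact V.sum_mem fun i hi => V.smul_mem _ (htV i hi)
  -- `(e_i^* ⊗ id)(Δ ⊗ id) Δ h = (e_i^* ⊗ Δ) Δ h = Δ tᵢ`
  have hΔt : ∀ i, comul (R := k) (t i) ∈ LinearMap.range (LinearMap.lTensor H V.subtype) := by
    intro i
    let f : H ⊗[k] (H ⊗[k] H) →ₗ[k] H ⊗[k] H :=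
      (TensorProduct.lid k _).toLinearMap ∘ₗ LinearMap.rTensor _ (e.coord i)
    have hti : t i = TensorProduct.lid k H (LinearMap.rTensor _ (e.coord i) (comul (R := k) h)) :=
      TensorProduct.equivFinsuppOfBasisLeft_apply e _ i
    have h1 : comul (R := k) (t i) = f (LinearMap.lTensor H comul (comul (R := k) h)) := by
      rw [hti]
      generalize comul (R := k) h = z
      induction z with
      | zero => simp
      | tmul x y => simp [f]
      | add x y hx hy => simp only [map_add, hx, hy]
    rw [h1, ← Coalgebra.coassoc_apply, ht]
    simp only [map_sum, LinearMap.rTensor_tmul]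
    refine Submodule.sum_mem _ fun m hm => ?_
    generalize comul (R := k) (e m) = z
    induction z with
    | zero => simp
    | tmul x y =>
      refine ⟨(e.coord i x • y) ⊗ₜ ⟨t m, htV m hm⟩, ?_⟩
      simp [f, TensorProduct.smul_tmul']
    | add x y hx hy =>
      simp only [TensorProduct.add_tmul, map_add]
      exact Submodule.add_mem _ hx hy
  have hΔV : ∀ v ∈ V, comul (R := k) v ∈ LinearMap.range (LinearMap.lTensor H V.subtype) := by
    intro v hv
    have : V ≤ (LinearMap.range (LinearMap.lTensor H V.subtype)).comap
        (comul (R := k) (A := H)) := by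
      refine Submodule.span_le.2 ?_
      rintro _ ⟨i, _, rfl⟩
      exact hΔt i
    exact this hv
  let v := Module.finBasis k V
  have hex : ∀ j, ∃ c : Fin (Module.finrank k V) → H,
      comul (R := k) (v j : H) = ∑ i, c i ⊗ₜ[k] (v i : H) := by
    intro j
    obtain ⟨z, hz⟩ := hΔV (v j) (v j).2
    refine ⟨fun i => TensorProduct.equivFinsuppOfBasisRight (M := H) v z i, ?_⟩
    rw [← hz]
    conv_lhs => rw [← (TensorProduct.equivFinsuppOfBasisRight (M := H) v).symm_apply_apply z,
      TensorProduct.equivFinsuppOfBasisRight_symm_apply]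
    rw [Finsupp.sum_fintype _ _ (by simp)]
    simp
  choose c hc using hex
  obtain ⟨p, hp⟩ := V.subtype.exists_leftInverse_of_injective (V.ker_subtype)
  have hφ : ∀ i j, (v.coord i ∘ₗ p) (v j : H) = if j = i then 1 else 0 := fun i j => by
    have hpj : p (v j : H) = v j := LinearMap.congr_fun hp (v j)
    simp [hpj, Finsupp.single_apply]
  refine ⟨_, c, ⟨fun i j => ?_, fun i j => ?_⟩, ?_⟩
  · refine congrFun (tmul_right_cancel _ _ hφ (fun j => comul (R := k) (c i j))
      (fun j => ∑ l, c i l ⊗ₜ[k] c l j) ?_) j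
    have := Coalgebra.coassoc_symm_apply (R := k) (v i : H)
    simp only [hc, map_sum, LinearMap.rTensor_tmul, LinearMap.lTensor_tmul,
      TensorProduct.tmul_sum, TensorProduct.assoc_symm_tmul] at this
    rw [← this, Finset.sum_comm]
    simp only [TensorProduct.sum_tmul]
  · refine congrFun (tmul_right_cancel _ _ hφ (fun j => counit (R := k) (c i j))
      (fun j => if i = j then 1 else 0) ?_) j
    have := Coalgebra.rTensor_counit_comul (R := k) (v i : H)
    simp only [hc, map_sum, LinearMap.rTensor_tmul] at this
    rw [this]
    simp [TensorProduct.ite_tmul]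
  · have hv : ∀ j, (v j : H) ∈ Submodule.span k
        (Set.range fun α : Fin _ × Fin _ => c α.1 α.2) := by
      intro j
      have := congrArg (TensorProduct.rid k H) (Coalgebra.lTensor_counit_comul (R := k) (v j : H))
      simp only [hc, map_sum, LinearMap.lTensor_tmul, TensorProduct.rid_tmul, one_smul] at this
      rw [← this]
      exact Submodule.sum_mem _ fun i _ => Submodule.smul_mem _ _
        (Submodule.subset_span ⟨(j, i), rfl⟩)
    have := congrArg Subtype.val (v.sum_repr ⟨h, hhV⟩)
    simp only [Submodule.coe_sum, Submodule.coe_smul] at this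
    rw [← this]
    exact Submodule.sum_mem _ fun i _ => Submodule.smul_mem _ _ (hv i)

end Bialg

section Hopf

variable {H : Type*} [Ring H] [HopfAlgebra k H]
variable {I : Type*} [Fintype I] [DecidableEq I]

local notation "𝑺" => HopfAlgebra.antipode (R := k)

theorem IsComatrix.mul_antipode {c : I → I → H} (hc : IsComatrix k c) (i j : I) :
    ∑ l, c i l * 𝑺 (c l j) = if i = j then 1 else 0 := by
  have := HopfAlgebra.mul_antipode_lTensor_comul_apply (R := k) (c i j)
  simpa [hc.comul, hc.counit, apply_ite] using this

theorem IsComatrix.antipode_mul {c : I → I → H} (hc : IsComatrix k c) (i j : I) :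
    ∑ l, 𝑺 (c i l) * c l j = if i = j then 1 else 0 := by
  have := HopfAlgebra.mul_antipode_rTensor_comul_apply (R := k) (c i j)
  simpa [hc.comul, hc.counit, apply_ite] using this

/-- The antipode reverses the coproduct: the transpose of `S(c)` is again a comatrix. Over
`H ⊗ H`, the matrix `Δ(S(c))` is a left inverse of `Δ(c)`, and the matrix
`∑ₗ S(c_{lj}) ⊗ S(c_{il})` is a right inverse. -/
theorem IsComatrix.antipode {c : I → I → H} (hc : IsComatrix k c) :
    IsComatrix k (fun i j => 𝑺 (c j i)) where
  comul i j := by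
    let D : Matrix I I (H ⊗[k] H) := Matrix.of fun i j => Coalgebra.comul (R := k) (c i j)
    let L : Matrix I I (H ⊗[k] H) := Matrix.of fun i j => Coalgebra.comul (R := k) (𝑺 (c i j))
    let R : Matrix I I (H ⊗[k] H) := Matrix.of fun i j => ∑ l, 𝑺 (c l j) ⊗ₜ[k] 𝑺 (c i l)
    have hL : L * D = 1 := by
      ext i j
      simp only [L, D, Matrix.mul_apply, Matrix.of_apply, ← Bialgebra.comul_mul, ← map_sum,
        hc.antipode_mul, Matrix.one_apply]
      split_ifs <;> simp
    have hR : D * R = 1 := by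
      ext i j
      simp only [R, D, Matrix.mul_apply, Matrix.of_apply, hc.comul, Matrix.one_apply,
        Finset.sum_mul_sum, Algebra.TensorProduct.tmul_mul_tmul]
      rw [Finset.sum_comm]
      have : ∀ l, ∑ m, ∑ r, (c i l * 𝑺 (c r j)) ⊗ₜ[k] (c l m * 𝑺 (c m r))
          = (c i l * 𝑺 (c l j)) ⊗ₜ[k] (1 : H) := by
        intro l
        rw [Finset.sum_comm]
        simp only [← TensorProduct.tmul_sum, hc.mul_antipode]
        simp [TensorProduct.tmul_ite]
      simp only [this, ← TensorProduct.sum_tmul, hc.mul_antipode]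
      split_ifs <;> simp [Algebra.TensorProduct.one_def]
    exact congrFun (congrFun (left_inv_eq_right_inv hL hR : L = R) j) i
  counit i j := by
    simp only [HopfAlgebra.counit_antipode, hc.counit, eq_comm]

end Hopf

end Comatrix

/-! ### Cocycle data evaluated on comatrices -/

section CocycleComatrix

variable {k : Type*} [Field k] {H : Type*} [Ring H] [HopfAlgebra k H]
variable {B : Type*} [Ring B] [Algebra k B]
variable {I J K : Type*} [Fintype I] [DecidableEq I] [Fintype J] [DecidableEq J]
  [Fintype K] [DecidableEq K]
variable {act : H →ₗ[k] B →ₗ[k] B} {σ σi : H →ₗ[k] H →ₗ[k] B}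
variable {c : I → I → H} {d : J → J → H} {f : K → K → H}

local notation "𝑺" => HopfAlgebra.antipode (R := k)

theorem IsComatrix.isRep2 (hc : IsComatrix k c) (i j : I) :
    IsRep2 k H (c i j) (fun a => c i ((Fintype.equivFin I).symm a))
      (fun a => c ((Fintype.equivFin I).symm a) j) := by
  rw [IsRep2, hc.comul]
  exact ((Fintype.equivFin I).symm.sum_comp fun l => c i l ⊗ₜ[k] c l j).symm

theorem IsComatrix.isRep3 (hc : IsComatrix k c) (i j : I) :
    IsRep3 k H (c i j) (fun a => c i ((Fintype.equivFin (I × I)).symm a).1)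
      (fun a => c ((Fintype.equivFin (I × I)).symm a).1 ((Fintype.equivFin (I × I)).symm a).2)
      (fun a => c ((Fintype.equivFin (I × I)).symm a).2 j) := by
  rw [IsRep3, hc.rep3, ← Fintype.sum_prod_type']
  exact ((Fintype.equivFin (I × I)).symm.sum_comp
    fun l => (c i l.1 ⊗ₜ[k] c l.1 l.2) ⊗ₜ[k] c l.2 j).symm

theorem IsComatrix.isRep4 (hc : IsComatrix k c) (i j : I) :
    IsRep4 k H (c i j) (fun a => c i ((Fintype.equivFin (I × I × I)).symm a).1)
      (fun a => c ((Fintype.equivFin (I × I × I)).symm a).1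
        ((Fintype.equivFin (I × I × I)).symm a).2.1)
      (fun a => c ((Fintype.equivFin (I × I × I)).symm a).2.1
        ((Fintype.equivFin (I × I × I)).symm a).2.2)
      (fun a => c ((Fintype.equivFin (I × I × I)).symm a).2.2 j) := by
  rw [IsRep4, hc.rep4]
  refine Eq.trans ?_ ((Fintype.equivFin (I × I × I)).symm.sum_comp
    fun l => ((c i l.1 ⊗ₜ[k] c l.1 l.2.1) ⊗ₜ[k] c l.2.1 l.2.2) ⊗ₜ[k] c l.2.2 j).symm
  simp only [Fintype.sum_prod_type]

theorem CocycleDatum.mat_act_mul (hcd : CocycleDatum k H B act σ σi) (hc : IsComatrix k c)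
    (i j : I) (a b : B) : act (c i j) (a * b) = ∑ l, act (c i l) a * act (c l j) b := by
  rw [hcd.toMeasuring.act_mul _ a b _ _ (hc.isRep2 i j)]
  exact (Fintype.equivFin I).symm.sum_comp fun l => act (c i l) a * act (c l j) b

theorem CocycleDatum.mat_act_one (hcd : CocycleDatum k H B act σ σi) (hc : IsComatrix k c)
    (i j : I) : act (c i j) 1 = if i = j then 1 else 0 := by
  rw [hcd.toMeasuring.act_one, hc.counit]
  split_ifs <;> simp

theorem CocycleDatum.mat_sigma_one (hcd : CocycleDatum k H B act σ σi) (hc : IsComatrix k c)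
    (i j : I) : σ (c i j) 1 = if i = j then 1 else 0 := by
  rw [hcd.sigma_one, hc.counit]
  split_ifs <;> simp

theorem CocycleDatum.mat_one_sigma (hcd : CocycleDatum k H B act σ σi) (hc : IsComatrix k c)
    (i j : I) : σ 1 (c i j) = if i = j then 1 else 0 := by
  rw [hcd.one_sigma, hc.counit]
  split_ifs <;> simp

theorem CocycleDatum.mat_conv_right (hcd : CocycleDatum k H B act σ σi) (hc : IsComatrix k c)
    (hd : IsComatrix k d) (i j : I) (p q : J) :
    ∑ α : I × J, σi (c i α.1) (d p α.2) * σ (c α.1 j) (d α.2 q)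
      = if i = j ∧ p = q then 1 else 0 := by
  have := hcd.conv_right _ _ _ _ _ _ (hc.isRep2 i j) (hd.isRep2 p q)
  rw [hc.counit, hd.counit] at this
  rw [Fintype.sum_prod_type]
  refine Eq.trans ?_ (this.trans ?_)
  · rw [← (Fintype.equivFin I).symm.sum_comp]
    refine Finset.sum_congr rfl fun a _ => ?_
    rw [← (Fintype.equivFin J).symm.sum_comp]
  · split_ifs <;> simp_all

theorem CocycleDatum.mat_act_act (hcd : CocycleDatum k H B act σ σi) (hc : IsComatrix k c)
    (hd : IsComatrix k d) (i j : I) (p q : J) (b : B) :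
    act (c i j) (act (d p q) b) = ∑ β : I × J, ∑ α : I × J,
      σ (c i α.1) (d p α.2) * act (c α.1 β.1 * d α.2 β.2) b * σi (c β.1 j) (d β.2 q) := by
  let F : (I × I) → (J × J) → B := fun l m =>
    σ (c i l.1) (d p m.1) * act (c l.1 l.2 * d m.1 m.2) b * σi (c l.2 j) (d m.2 q)
  have h1 : act (c i j) (act (d p q) b) = ∑ l, ∑ m, F l m := by
    rw [hcd.act_act _ _ b _ _ _ _ _ _ (hc.isRep3 i j) (hd.isRep3 p q),
      ← (Fintype.equivFin (I × I)).symm.sum_comp]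
    refine Finset.sum_congr rfl fun a _ => ?_
    rw [← (Fintype.equivFin (J × J)).symm.sum_comp]
  rw [h1, Finset.sum_comm (s := (Finset.univ : Finset (I × J))), ← Fintype.sum_prod_type',
    ← Fintype.sum_prod_type', ← (Equiv.prodProdProdComm I I J J).sum_comp]
  rfl

theorem CocycleDatum.mat_cocycle (hcd : CocycleDatum k H B act σ σi) (hc : IsComatrix k c)
    (hd : IsComatrix k d) (hf : IsComatrix k f) (i j : I) (p q : J) (u w : K) :
    ∑ l, ∑ m, ∑ r, act (c i l) (σ (d p m) (f u r)) * σ (c l j) (d m q * f r w)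
      = ∑ l, ∑ m, σ (c i l) (d p m) * σ (c l j * d m q) (f u w) := by
  have := hcd.cocycle _ _ _ _ _ _ _ _ _ (hc.isRep2 i j) (hd.isRep2 p q) (hf.isRep2 u w)
  refine Eq.trans ?_ (this.trans ?_)
  · rw [← (Fintype.equivFin I).symm.sum_comp]
    refine Finset.sum_congr rfl fun a _ => ?_
    rw [← (Fintype.equivFin J).symm.sum_comp]
    refine Finset.sum_congr rfl fun a _ => ?_
    rw [← (Fintype.equivFin K).symm.sum_comp]
  · rw [← (Fintype.equivFin I).symm.sum_comp]
    refine Finset.sum_congr rfl fun a _ => ?_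
    rw [← (Fintype.equivFin J).symm.sum_comp]

/-- `(h₍₁₎ ▷ (g₍₁₎ ▷ b)) σ(h₍₂₎, g₍₂₎) = σ(h₍₁₎, g₍₁₎) (h₍₂₎g₍₂₎ ▷ b)`. -/
theorem CocycleDatum.mat_exchange (hcd : CocycleDatum k H B act σ σi) (hc : IsComatrix k c)
    (hd : IsComatrix k d) (b : B) :
    (Matrix.of fun α β : I × J => act (c α.1 β.1) (act (d α.2 β.2) b))
        * (Matrix.of fun α β : I × J => σ (c α.1 β.1) (d α.2 β.2))
      = (Matrix.of fun α β : I × J => σ (c α.1 β.1) (d α.2 β.2))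
        * (Matrix.of fun α β : I × J => act (c α.1 β.1 * d α.2 β.2) b) := by
  have h1 : (Matrix.of fun α β : I × J => act (c α.1 β.1) (act (d α.2 β.2) b))
      = (Matrix.of fun α β : I × J => σ (c α.1 β.1) (d α.2 β.2))
        * (Matrix.of fun α β : I × J => act (c α.1 β.1 * d α.2 β.2) b)
        * (Matrix.of fun α β : I × J => σi (c α.1 β.1) (d α.2 β.2)) := by
    ext α β
    simp only [Matrix.mul_apply, Matrix.of_apply, hcd.mat_act_act hc hd, Finset.sum_mul]
  have h2 : (Matrix.of fun α β : I × J => σi (c α.1 β.1) (d α.2 β.2))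
      * (Matrix.of fun α β : I × J => σ (c α.1 β.1) (d α.2 β.2)) = 1 := by
    ext α β
    simp only [Matrix.mul_apply, Matrix.of_apply, hcd.mat_conv_right hc hd, Matrix.one_apply,
      Prod.ext_iff]
  rw [h1, mul_assoc, h2, mul_one]

/-- The matrix of `τ(h) = σ(h₍₁₎, S(h₍₂₎))`. -/
def tauMat (σ : H →ₗ[k] H →ₗ[k] B) (c : I → I → H) (i j : I) : B :=
  ∑ l, σ (c i l) (𝑺 (c l j))

/-- `(h₍₁₎g₍₁₎ ▷ σ(S(g₍₄₎), S(h₍₄₎))) σ(h₍₂₎g₍₂₎, S(h₍₃₎g₍₃₎)) = σ(h₍₁₎g₍₁₎, S(g₍₂₎)) τ(h₍₂₎)`. -/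
theorem CocycleDatum.mat_collapse (hcd : CocycleDatum k H B act σ σi) (hc : IsComatrix k c)
    (hd : IsComatrix k d) (α : I × J) (j : I) (m : J) :
    ∑ γ : I × J, ∑ β : I × J, ∑ s, ∑ r,
        act (c α.1 β.1 * d α.2 β.2) (σ (𝑺 (d s m)) (𝑺 (c r j)))
          * σ (c β.1 γ.1 * d β.2 γ.2) (𝑺 (d γ.2 s) * 𝑺 (c γ.1 r))
      = ∑ β : I × J, σ (c α.1 β.1 * d α.2 β.2) (𝑺 (d β.2 m)) * tauMat σ c β.1 j := by
  have h1 : ∀ γ : I × J, _ := fun γ =>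
    hcd.mat_cocycle (hc.prod hd) hd.antipode hc.antipode α γ m γ.2 j γ.1
  simp only [h1]
  rw [Finset.sum_comm]
  refine Finset.sum_congr rfl fun β _ => ?_
  rw [Finset.sum_comm]
  have h2 : ∀ s, ∑ γ : I × J, σ (c α.1 β.1 * d α.2 β.2) (𝑺 (d s m))
        * σ (c β.1 γ.1 * d β.2 γ.2 * 𝑺 (d γ.2 s)) (𝑺 (c γ.1 j))
      = if β.2 = s then σ (c α.1 β.1 * d α.2 β.2) (𝑺 (d s m)) * tauMat σ c β.1 j else 0 := by
    intro s
    rw [← Finset.mul_sum, Fintype.sum_prod_type]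
    simp only [mul_assoc, ← LinearMap.sum_apply, ← map_sum, ← Finset.mul_sum, hd.mul_antipode]
    split_ifs <;> simp [tauMat]
  simp only [h2, Finset.sum_ite_eq, Finset.mem_univ, if_true]

/-- `σ(h₍₁₎, g₍₁₎) σ(h₍₂₎g₍₂₎, S(g₍₃₎)) τ(h₍₃₎) = (h₍₁₎ ▷ τ(g)) τ(h₍₂₎)`. -/
theorem CocycleDatum.mat_collapse' (hcd : CocycleDatum k H B act σ σi) (hc : IsComatrix k c)
    (hd : IsComatrix k d) (α : I × J) (j : I) (m : J) :
    ∑ γ : I × J, σ (c α.1 γ.1) (d α.2 γ.2)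
        * ∑ β : I × J, σ (c γ.1 β.1 * d γ.2 β.2) (𝑺 (d β.2 m)) * tauMat σ c β.1 j
      = ∑ l, act (c α.1 l) (tauMat σ d α.2 m) * tauMat σ c l j := by
  have h1 : ∀ β : I × J, ∑ γ : I × J, σ (c α.1 γ.1) (d α.2 γ.2)
        * σ (c γ.1 β.1 * d γ.2 β.2) (𝑺 (d β.2 m))
      = ∑ l, ∑ s, ∑ r, act (c α.1 l) (σ (d α.2 s) (𝑺 (d r m)))
          * σ (c l β.1) (d s β.2 * 𝑺 (d β.2 r)) := by
    intro β
    rw [hcd.mat_cocycle hc hd hd.antipode, Fintype.sum_prod_type]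
  simp only [Finset.mul_sum, ← mul_assoc]
  rw [Finset.sum_comm]
  simp only [← Finset.sum_mul, h1]
  rw [Fintype.sum_prod_type]
  refine Finset.sum_congr rfl fun l _ => ?_
  simp only [← Finset.sum_mul]
  congr 1
  have h2 : ∀ l', ∑ x, ∑ s, ∑ r, act (c α.1 l') (σ (d α.2 s) (𝑺 (d r m)))
          * σ (c l' l) (d s x * 𝑺 (d x r))
      = if l' = l then act (c α.1 l') (tauMat σ d α.2 m) else 0 := by
    intro l'
    rw [Finset.sum_comm]
    have h3 : ∀ s, ∑ x, ∑ r, act (c α.1 l') (σ (d α.2 s) (𝑺 (d r m)))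
          * σ (c l' l) (d s x * 𝑺 (d x r))
        = if l' = l then act (c α.1 l') (σ (d α.2 s) (𝑺 (d s m))) else 0 := by
      intro s
      rw [Finset.sum_comm]
      simp only [← Finset.mul_sum, ← map_sum, hd.mul_antipode, apply_ite (σ (c l' l)),
        hcd.mat_sigma_one hc, map_zero]
      simp
    simp only [h3]
    split_ifs <;> simp [tauMat]
  rw [Finset.sum_comm]
  simp only [h2, Finset.sum_ite_eq', Finset.mem_univ, if_true]

/-- `(g₍₁₎ ▷ (S(g₍₃₎) ▷ b)) τ(g₍₂₎) = τ(g) b`. -/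
theorem CocycleDatum.mat_tau_conj (hcd : CocycleDatum k H B act σ σi)
    (hd : IsComatrix k d) (p q : J) (b : B) :
    ∑ m, ∑ r, act (d p r) (act (𝑺 (d m q)) b) * tauMat σ d r m = tauMat σ d p q * b := by
  have h1 : ∀ s, ∑ m, ∑ r, act (d p r) (act (𝑺 (d m q)) b) * σ (d r s) (𝑺 (d s m))
      = ∑ m, ∑ r, σ (d p r) (𝑺 (d m q)) * act (d r s * 𝑺 (d s m)) b := by
    intro s
    have := congrFun (congrFun (hcd.mat_exchange hd hd.antipode b) (p, q)) (s, s)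
    simp only [Matrix.mul_apply, Matrix.of_apply, Fintype.sum_prod_type] at this
    rw [Finset.sum_comm, this, Finset.sum_comm]
  simp only [tauMat, Finset.mul_sum]
  have h2 : ∀ m, ∑ r, ∑ s, act (d p r) (act (𝑺 (d m q)) b) * σ (d r s) (𝑺 (d s m))
      = ∑ s, ∑ r, act (d p r) (act (𝑺 (d m q)) b) * σ (d r s) (𝑺 (d s m)) :=
    fun m => Finset.sum_comm
  simp only [h2]
  rw [Finset.sum_comm]
  simp only [h1]
  rw [Finset.sum_comm]
  have h3 : ∀ m, ∑ s, ∑ r, σ (d p r) (𝑺 (d m q)) * act (d r s * 𝑺 (d s m)) b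
      = σ (d p m) (𝑺 (d m q)) * b := by
    intro m
    rw [Finset.sum_comm]
    simp only [← Finset.mul_sum, ← LinearMap.sum_apply, ← map_sum, hd.mul_antipode]
    rw [Finset.sum_eq_single m] <;> simp +contextual [hcd.one_act]
  simp only [h3, Finset.sum_mul]


theorem sum_rotate {I J K M : Type*} [Fintype I] [Fintype J] [Fintype K] [AddCommMonoid M]
    (F : I → J → K → M) : ∑ i, ∑ j, ∑ l, F i j l = ∑ l, ∑ i, ∑ j, F i j l := by
  simp only [Finset.sum_comm (s := (Finset.univ : Finset J)) (t := (Finset.univ : Finset K))]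
  exact Finset.sum_comm

theorem sum_reverse {I J K M : Type*} [Fintype I] [Fintype J] [Fintype K] [AddCommMonoid M]
    (F : I → J → K → M) : ∑ i, ∑ j, ∑ l, F i j l = ∑ l, ∑ j, ∑ i, F i j l := by
  rw [sum_rotate]
  exact Finset.sum_congr rfl fun _ _ => Finset.sum_comm

/-- The computation behind multiplicativity of the counit:
`σ(h₍₁₎, g₍₁₎) (h₍₂₎g₍₂₎ ▷ (a (S(g₍₅₎) ▷ b) σ(S(g₍₄₎), S(h₍₄₎)))) τ(h₍₃₎g₍₃₎)
  = (h₍₁₎ ▷ ((g₍₁₎ ▷ a) τ(g₍₂₎) b)) τ(h₍₂₎)`. -/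
theorem CocycleDatum.mat_key (hcd : CocycleDatum k H B act σ σi) (hc : IsComatrix k c)
    (hd : IsComatrix k d) (i j : I) (p q : J) (a b : B) :
    ∑ m, ∑ α : I × J, ∑ δ : I × J, ∑ β : I × J, σ (c i α.1) (d p α.2)
        * (act (c α.1 β.1 * d α.2 β.2)
            (a * act (𝑺 (d m q)) b * σ (𝑺 (d δ.2 m)) (𝑺 (c δ.1 j)))
          * tauMat σ (fun α β : I × J => c α.1 β.1 * d α.2 β.2) β δ)
      = ∑ l, act (c i l) ((∑ r, act (d p r) a * tauMat σ d r q) * b) * tauMat σ c l j := by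
  -- expand the action on the last factor and collapse it together with `τ(h₍₃₎g₍₃₎)`
  have h1 : ∀ (m : J) (α : I × J) (e : B), ∑ δ : I × J, ∑ β : I × J,
      act (c α.1 β.1 * d α.2 β.2) (e * σ (𝑺 (d δ.2 m)) (𝑺 (c δ.1 j)))
          * tauMat σ (fun α β : I × J => c α.1 β.1 * d α.2 β.2) β δ
      = ∑ η : I × J, act (c α.1 η.1 * d α.2 η.2) e
          * ∑ β : I × J, σ (c η.1 β.1 * d η.2 β.2) (𝑺 (d β.2 m)) * tauMat σ c β.1 j := by
    intro m α e
    have hx : ∀ (α β : I × J) (u v : B), act (c α.1 β.1 * d α.2 β.2) (u * v)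
        = ∑ η : I × J, act (c α.1 η.1 * d α.2 η.2) u * act (c η.1 β.1 * d η.2 β.2) v :=
      fun α β u v => hcd.mat_act_mul (hc.prod hd) α β u v
    have hS : ∀ β δ : I × J, tauMat σ (fun α β : I × J => c α.1 β.1 * d α.2 β.2) β δ
        = ∑ γ : I × J, σ (c β.1 γ.1 * d β.2 γ.2) (𝑺 (d γ.2 δ.2) * 𝑺 (c γ.1 δ.1)) := by
      intro β δ
      simp only [tauMat, HopfAlgebra.antipode_mul_antidistrib]
    have hK : ∀ η : I × J, ∑ δ : I × J, ∑ β : I × J,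
        act (c η.1 β.1 * d η.2 β.2) (σ (𝑺 (d δ.2 m)) (𝑺 (c δ.1 j)))
          * tauMat σ (fun α β : I × J => c α.1 β.1 * d α.2 β.2) β δ
        = ∑ β : I × J, σ (c η.1 β.1 * d η.2 β.2) (𝑺 (d β.2 m)) * tauMat σ c β.1 j := by
      intro η
      rw [← hcd.mat_collapse hc hd η j m]
      simp only [hS, Finset.mul_sum]
      rw [sum_reverse]
      simp only [Fintype.sum_prod_type_right (f := fun δ : I × J => act _ (σ (𝑺 (d δ.2 m)) _) * _)]
    simp only [hx, Finset.sum_mul]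
    simp only [← hK, Finset.mul_sum, mul_assoc]
    exact sum_rotate _
  have h2 : ∀ (m : J) (e : B), ∑ α : I × J, ∑ δ : I × J, ∑ β : I × J, σ (c i α.1) (d p α.2)
        * (act (c α.1 β.1 * d α.2 β.2) (e * σ (𝑺 (d δ.2 m)) (𝑺 (c δ.1 j)))
          * tauMat σ (fun α β : I × J => c α.1 β.1 * d α.2 β.2) β δ)
      = ∑ l, act (c i l) (∑ r, act (d p r) e * tauMat σ d r m) * tauMat σ c l j := by
    intro m e
    simp only [← Finset.mul_sum, h1]
    have h3 := congrFun (congrArg (fun M => Matrix.mulVec M fun η : I × J =>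
      ∑ β : I × J, σ (c η.1 β.1 * d η.2 β.2) (𝑺 (d β.2 m)) * tauMat σ c β.1 j)
      (hcd.mat_exchange hc hd e)) (i, p)
    simp only [← Matrix.mulVec_mulVec] at h3
    simp only [Matrix.mulVec, dotProduct, Matrix.of_apply, hcd.mat_collapse' hc hd] at h3
    rw [← h3, Fintype.sum_prod_type]
    simp only [map_sum, hcd.mat_act_mul hc, Finset.mul_sum, Finset.sum_mul, mul_assoc]
    exact sum_reverse _
  simp only [h2]
  rw [Finset.sum_comm]
  simp only [← Finset.sum_mul, ← map_sum]
  refine Finset.sum_congr rfl fun l _ => ?_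
  congr 2
  simp only [hcd.mat_act_mul hd, Finset.sum_mul, mul_assoc, ← hcd.mat_tau_conj hd,
    Finset.mul_sum]
  exact sum_rotate _

/-! ### Product and counit of the algebroid on comatrices -/

/-- Additive statements about `B ⊗ B ⊗ H` need only be checked on `b ⊗ b' ⊗ c_{ij}` with `c` a
comatrix. -/
@[elab_as_elim]
theorem comatrix_induction {motive : B ⊗[k] (B ⊗[k] H) → Prop} (X : B ⊗[k] (B ⊗[k] H))
    (zero : motive 0) (add : ∀ X Y, motive X → motive Y → motive (X + Y))
    (tmul : ∀ (n : ℕ) (c : Fin n → Fin n → H), IsComatrix k c → ∀ (b b' : B) (i j : Fin n),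
      motive (b ⊗ₜ[k] (b' ⊗ₜ[k] c i j))) : motive X := by
  induction X with
  | zero => exact zero
  | add X Y hX hY => exact add X Y hX hY
  | tmul b z =>
    induction z with
    | zero => simpa using zero
    | add z w hz hw => simpa only [TensorProduct.tmul_add] using add _ _ hz hw
    | tmul b' h =>
      obtain ⟨n, c, hc, hh⟩ := exists_comatrix (k := k) h
      induction hh using Submodule.span_induction generalizing b' with
      | mem x hx =>
        obtain ⟨⟨i, j⟩, rfl⟩ := hx
        exact tmul n c hc b b' i j
      | zero => simpa using zero
      | add x y _ _ hx hy =>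
        simpa only [TensorProduct.tmul_add] using add _ _ (hx b') (hy b')
      | smul r x _ hx =>
        rw [← TensorProduct.smul_tmul]
        exact hx (r • b')

theorem mat_eps (εL : B ⊗[k] (B ⊗[k] H) →ₗ[k] B)
    (hεL : ∀ (b b' : B) (h : H) {n : ℕ} (h1 h2 h3 : Fin n → H), IsRep3 k H h h1 h2 h3 →
      εL (b ⊗ₜ[k] (b' ⊗ₜ[k] h)) = ∑ i, b * act (h1 i) b' * σ (h2 i) (𝑺 (h3 i)))
    (hc : IsComatrix k c) (b b' : B) (i j : I) :
    εL (b ⊗ₜ[k] (b' ⊗ₜ[k] c i j)) = ∑ l, b * act (c i l) b' * tauMat σ c l j := by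
  rw [hεL _ _ _ _ _ _ (hc.isRep3 i j)]
  refine ((Fintype.equivFin (I × I)).symm.sum_comp
    fun l => b * act (c i l.1) b' * σ (c l.1 l.2) (𝑺 (c l.2 j))).trans ?_
  simp only [Fintype.sum_prod_type, tauMat, Finset.mul_sum]

theorem mat_mult (mult : B ⊗[k] (B ⊗[k] H) →ₗ[k] B ⊗[k] (B ⊗[k] H) →ₗ[k] B ⊗[k] (B ⊗[k] H))
    (hmult : IsAlgebroidMul k H B act σ mult) (hc : IsComatrix k c) (hd : IsComatrix k d)
    (a a' b b' : B) (i j : I) (p q : J) :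
    mult (a ⊗ₜ[k] (a' ⊗ₜ[k] c i j)) (b ⊗ₜ[k] (b' ⊗ₜ[k] d p q))
      = ∑ l, ∑ α : I × J, ∑ δ : I × J, ∑ m, (a * act (c i l) b * σ (c l α.1) (d p α.2)) ⊗ₜ[k]
          ((b' * act (𝑺 (d m q)) a' * σ (𝑺 (d δ.2 m)) (𝑺 (c δ.1 j)))
            ⊗ₜ[k] (c α.1 δ.1 * d α.2 δ.2)) := by
  rw [hmult _ _ _ _ _ _ _ _ _ _ _ _ _ _ (hc.isRep4 i j) (hd.isRep4 p q)]
  let F : (I × I × I) → (J × J × J) → B ⊗[k] (B ⊗[k] H) := fun l m =>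
    (a * act (c i l.1) b * σ (c l.1 l.2.1) (d p m.1)) ⊗ₜ[k]
          ((b' * act (𝑺 (d m.2.2 q)) a' * σ (𝑺 (d m.2.1 m.2.2)) (𝑺 (c l.2.2 j)))
            ⊗ₜ[k] (c l.2.1 l.2.2 * d m.1 m.2.1))
  trans ∑ l, ∑ m, F l m
  · rw [← (Fintype.equivFin (I × I × I)).symm.sum_comp]
    refine Finset.sum_congr rfl fun _ _ => ?_
    rw [← (Fintype.equivFin (J × J × J)).symm.sum_comp]
  · simp only [Fintype.sum_prod_type, F]
    refine Finset.sum_congr rfl fun l _ => Finset.sum_congr rfl fun l' _ => ?_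
    rw [Finset.sum_comm]

/-- `(a ⊗ a' ⊗ h)(b ⊗ b' ⊗ 1) = a (h₍₁₎ ▷ b) ⊗ b'a' ⊗ h₍₂₎`; this covers multiplication by `s(b)`
and by `t(b')` on the right. -/
theorem mat_mult_one
    (hcd : CocycleDatum k H B act σ σi)
    (mult : B ⊗[k] (B ⊗[k] H) →ₗ[k] B ⊗[k] (B ⊗[k] H) →ₗ[k] B ⊗[k] (B ⊗[k] H))
    (hmult : IsAlgebroidMul k H B act σ mult) (hc : IsComatrix k c)
    (a a' b b' : B) (i j : I) :
    mult (a ⊗ₜ[k] (a' ⊗ₜ[k] c i j)) (b ⊗ₜ[k] (b' ⊗ₜ[k] 1))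
      = ∑ l, (a * act (c i l) b) ⊗ₜ[k] ((b' * a') ⊗ₜ[k] c l j) := by
  have := mat_mult mult hmult hc (IsComatrix.one (k := k)) a a' b b' i j () ()
  rw [this]
  simp [Fintype.sum_prod_type, HopfAlgebra.antipode_one, hcd.one_act, hcd.mat_sigma_one hc,
    hcd.mat_one_sigma hc.antipode, TensorProduct.ite_tmul, TensorProduct.tmul_ite]

theorem one_mat_mult
    (hcd : CocycleDatum k H B act σ σi)
    (mult : B ⊗[k] (B ⊗[k] H) →ₗ[k] B ⊗[k] (B ⊗[k] H) →ₗ[k] B ⊗[k] (B ⊗[k] H))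
    (hmult : IsAlgebroidMul k H B act σ mult) (hd : IsComatrix k d)
    (a b b' : B) (p q : J) :
    mult (a ⊗ₜ[k] (1 ⊗ₜ[k] 1)) (b ⊗ₜ[k] (b' ⊗ₜ[k] d p q))
      = (a * b) ⊗ₜ[k] (b' ⊗ₜ[k] d p q) := by
  have := mat_mult mult hmult (IsComatrix.one (k := k)) hd a 1 b b' () () p q
  rw [this]
  simp [Fintype.sum_prod_type, HopfAlgebra.antipode_one, hcd.one_act, hcd.mat_one_sigma hd,
    hcd.mat_act_one hd.antipode,
    hcd.mat_sigma_one hd.antipode, TensorProduct.ite_tmul, TensorProduct.tmul_ite]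

/-- `ε_L((a ⊗ a' ⊗ h) Y) = a (h₍₁₎ ▷ (ε_L(Y) a')) τ(h₍₂₎)` for `Y = b ⊗ b' ⊗ g`. -/
theorem mat_eps_mul (hcd : CocycleDatum k H B act σ σi)
    (mult : B ⊗[k] (B ⊗[k] H) →ₗ[k] B ⊗[k] (B ⊗[k] H) →ₗ[k] B ⊗[k] (B ⊗[k] H))
    (hmult : IsAlgebroidMul k H B act σ mult)
    (εL : B ⊗[k] (B ⊗[k] H) →ₗ[k] B)
    (hεL : ∀ (b b' : B) (h : H) {n : ℕ} (h1 h2 h3 : Fin n → H), IsRep3 k H h h1 h2 h3 →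
      εL (b ⊗ₜ[k] (b' ⊗ₜ[k] h)) = ∑ i, b * act (h1 i) b' * σ (h2 i) (𝑺 (h3 i)))
    (hc : IsComatrix k c) (hd : IsComatrix k d) (a a' b b' : B) (i j : I) (p q : J) :
    εL (mult (a ⊗ₜ[k] (a' ⊗ₜ[k] c i j)) (b ⊗ₜ[k] (b' ⊗ₜ[k] d p q)))
      = ∑ l, a * act (c i l) (εL (b ⊗ₜ[k] (b' ⊗ₜ[k] d p q)) * a') * tauMat σ c l j := by
  rw [mat_mult mult hmult hc hd, mat_eps εL hεL hd]
  simp only [map_sum, mat_eps εL hεL (hc.prod hd)]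
  have h1 : ∀ l, ∑ α : I × J, ∑ δ : I × J, ∑ m, ∑ β : I × J,
      a * act (c i l) b * σ (c l α.1) (d p α.2) * act (c α.1 β.1 * d α.2 β.2)
          (b' * act (𝑺 (d m q)) a' * σ (𝑺 (d δ.2 m)) (𝑺 (c δ.1 j)))
        * tauMat σ (fun α β : I × J => c α.1 β.1 * d α.2 β.2) β δ
      = a * act (c i l) b * ∑ l', act (c l l') ((∑ r, act (d p r) b' * tauMat σ d r q) * a')
          * tauMat σ c l' j := by
    intro l
    rw [← hcd.mat_key hc hd]
    simp only [Finset.mul_sum, mul_assoc]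
    exact sum_rotate _
  rw [Finset.sum_congr rfl fun l _ => h1 l]
  have h2 : ∑ r, b * act (d p r) b' * tauMat σ d r q
      = b * ∑ r, act (d p r) b' * tauMat σ d r q := by
    simp only [Finset.mul_sum, mul_assoc]
  rw [h2]
  generalize ∑ r, act (d p r) b' * tauMat σ d r q = y
  simp only [mul_assoc b, hcd.mat_act_mul hc _ _ b (y * a'), Finset.mul_sum, Finset.sum_mul,
    mul_assoc]
  exact Finset.sum_comm

end CocycleComatrix

section Statements

variable {k : Type*} [Field k]
variable {H : Type*} [Ring H] [HopfAlgebra k H]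
variable {B : Type*} [Ring B] [Algebra k B]

local notation "𝑺" => HopfAlgebra.antipode (R := k)

/-- The counit `ε_L(b⊗b'⊗h) = b(h₍₁₎▷b')σ(h₍₂₎,S(h₍₃₎))` of the cocycle Hopf algebroid
is a left character. -/
theorem statement12 (act : H →ₗ[k] B →ₗ[k] B) (σ σi : H →ₗ[k] H →ₗ[k] B)
    (hcd : CocycleDatum k H B act σ σi)
    (mult : B ⊗[k] (B ⊗[k] H) →ₗ[k] B ⊗[k] (B ⊗[k] H) →ₗ[k] B ⊗[k] (B ⊗[k] H))
    (hmult : IsAlgebroidMul k H B act σ mult)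
    (εL : B ⊗[k] (B ⊗[k] H) →ₗ[k] B)
    (hεL : ∀ (b b' : B) (h : H) {n : ℕ} (h1 h2 h3 : Fin n → H), IsRep3 k H h h1 h2 h3 →
      εL (b ⊗ₜ[k] (b' ⊗ₜ[k] h)) = ∑ i, b * act (h1 i) b' * σ (h2 i) (𝑺 (h3 i))) :
    -- ε_L(1) = 1
    εL ((1 : B) ⊗ₜ[k] ((1 : B) ⊗ₜ[k] (1 : H))) = 1
    ∧
    -- ε_L(s(c)X) = c ε_L(X)
    (∀ (c : B) (X : B ⊗[k] (B ⊗[k] H)),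
      εL (mult (c ⊗ₜ[k] ((1 : B) ⊗ₜ[k] (1 : H))) X) = c * εL X)
    ∧
    -- ε_L(X s(ε_L Y)) = ε_L(XY)
    (∀ X Y : B ⊗[k] (B ⊗[k] H),
      εL (mult X ((εL Y) ⊗ₜ[k] ((1 : B) ⊗ₜ[k] (1 : H)))) = εL (mult X Y))
    ∧
    -- ε_L(X t(ε_L Y)) = ε_L(XY)
    (∀ X Y : B ⊗[k] (B ⊗[k] H),
      εL (mult X ((1 : B) ⊗ₜ[k] ((εL Y) ⊗ₜ[k] (1 : H)))) = εL (mult X Y)) := by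
  -- both `ε_L(X s(y))` and `ε_L(X t(y))` equal `a (h₍₁₎ ▷ (y a')) τ(h₍₂₎)` for `X = a ⊗ a' ⊗ h`
  have hs : ∀ (y : B) {n : ℕ} {c : Fin n → Fin n → H}, IsComatrix k c →
      ∀ (a a' : B) (i j : Fin n),
      εL (mult (a ⊗ₜ[k] (a' ⊗ₜ[k] c i j)) (y ⊗ₜ[k] ((1 : B) ⊗ₜ[k] (1 : H))))
        = ∑ l, a * act (c i l) (y * a') * tauMat σ c l j := by
    intro y n c hc a a' i j
    simp only [mat_mult_one hcd mult hmult hc, map_sum, mat_eps εL hεL hc,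
      hcd.mat_act_mul hc _ _ y a', Finset.mul_sum, Finset.sum_mul, mul_assoc, one_mul]
    exact Finset.sum_comm
  have ht : ∀ (y : B) {n : ℕ} {c : Fin n → Fin n → H}, IsComatrix k c →
      ∀ (a a' : B) (i j : Fin n),
      εL (mult (a ⊗ₜ[k] (a' ⊗ₜ[k] c i j)) ((1 : B) ⊗ₜ[k] (y ⊗ₜ[k] (1 : H))))
        = ∑ l, a * act (c i l) (y * a') * tauMat σ c l j := by
    intro y n c hc a a' i j
    simp [mat_mult_one hcd mult hmult hc, mat_eps εL hεL hc, hcd.mat_act_one hc,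
      TensorProduct.ite_tmul]
  refine ⟨?_, fun c X => ?_, fun X Y => ?_, fun X Y => ?_⟩
  · have := mat_eps εL hεL (IsComatrix.one (k := k)) (1 : B) 1 () ()
    simpa [tauMat, hcd.one_act, hcd.one_sigma] using this
  · induction X using comatrix_induction with
    | zero => simp
    | add X Y hX hY => simp only [map_add, hX, hY, mul_add]
    | tmul n d hd b b' p q =>
      simp only [one_mat_mult hcd mult hmult hd, mat_eps εL hεL hd, Finset.mul_sum, mul_assoc]
  · induction X using comatrix_induction with
    | zero => simp
    | add X X' hX hX' => simp only [map_add, LinearMap.add_apply, hX, hX']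
    | tmul n c hc a a' i j =>
      induction Y using comatrix_induction with
      | zero => simp
      | add Y Y' hY hY' => simp only [map_add, TensorProduct.add_tmul, hY, hY']
      | tmul m d hd b b' p q => rw [hs _ hc, mat_eps_mul hcd mult hmult εL hεL hc hd]
  · induction X using comatrix_induction with
    | zero => simp
    | add X X' hX hX' => simp only [map_add, LinearMap.add_apply, hX, hX']
    | tmul n c hc a a' i j =>
      induction Y using comatrix_induction with
      | zero => simp
      | add Y Y' hY hY' =>
        simp only [map_add, TensorProduct.add_tmul, TensorProduct.tmul_add, hY, hY']
      | tmul m d hd b b' p q => rw [ht _ hc, mat_eps_mul hcd mult hmult εL hεL hc hd]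

end Statements
end
end

section
/- Let (▷,σ) be a cocycle datum of associative type for a Hopf algebra H with bijective antipode on an algebra B. Define linear maps on B⊗B⊗H by S_L(b⊗b'⊗h) := b' ⊗ σ⁻¹(S²(h_{(2)}), S(h_{(1)}))·(S²(h_{(3)})▷b) ⊗ S(h_{(4)}) and T(b⊗b'⊗h) := (h_{(2)}▷b')σ(h_{(3)}, S(h_{(4)})) ⊗ b ⊗ S⁻¹(h_{(1)}). Then S_L and T are mutually inverse, and with respect to the cocycle Hopf algebroid product one has S_L(t(c)X) = S_L(X)s(c) and T(s(c)X) = T(X)t(c) for all c ∈ B and X ∈ B⊗B⊗H. -/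
/-!
Everything is computed in Sweedler calculus.  On pure tensors the two maps are
`S_L(b⊗b'⊗h) = b' ⊗ w(b, S(h₍₁₎)) ⊗ S(h₍₂₎)` and `T(b⊗b'⊗h) = v(b', h₍₂₎) ⊗ b ⊗ S⁻¹(h₍₁₎)`, where
`v(b,h) = (h₍₁₎▷b)σ(h₍₂₎,S(h₍₃₎))` and `w(b,h) = σ⁻¹(S(h₍₂₎),h₍₃₎)(S(h₍₁₎)▷b)`.  Since `S` reverses
the comultiplication, `T ∘ S_L = id` and `S_L ∘ T = id` amount to
`v(w(b,h₍₂₎),h₍₁₎) = ε(h)b` and `w(v(b,h₍₂₎),h₍₁₎) = ε(h)b` (`CocycleDatum.sw_vMap_wMap`,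
`CocycleDatum.sw_wMap_vMap`).

These rest on two identities in the convolution algebra `Hom(H⊗H⊗H, B)`.  There the cocycle
condition reads `α * β = δ * η` with the convolution invertible elements `α = h▷σ(g,f)`,
`β = σ(h,gf)`, `δ = σ(h,g)ε(f)`, `η = σ(hg,f)`, and associative type says that `δ` commutes with
`κ = ((hg)▷b)ε(f)`.  Hence `δ⁻¹ * κ * α = κ * η * β⁻¹` and `α⁻¹ * κ * δ = β * η⁻¹ * κ`
(`CocycleDatum.identity_one`, `CocycleDatum.identity_two`).  Evaluating the first at
`S(h₍₁₎) ⊗ h₍₂₎ ⊗ S(h₍₃₎)` and the second at `h₍₁₎ ⊗ S(h₍₂₎) ⊗ h₍₃₎`, the left sides become the two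
composites of `v` and `w`, and the right sides collapse by the antipode axiom.

The compatibilities with `s` and `t` follow from the explicit form of the one-sided products by
`s(c)` and `t(c)`.

A Sweedler sum `∑ f(h₍₁₎,h₍₂₎)` is written `sw k h f`, with `f` an unbundled function whose
bilinearity is supplied by the class `Lin`.
-/

open scoped TensorProduct
open Coalgebra

noncomputable section

/-! ### Sweedler sums -/

section SweedlerCalculus

set_option linter.unusedSectionVars false

variable (k : Type*) [Field k]

/-- Linearity of an unbundled map, as a class, so that the multilinearity of a Sweedler
expression in its legs is found by instance search. -/
class Lin {M N : Type*} [AddCommMonoid M] [Module k M] [AddCommMonoid N] [Module k N]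
    (f : M → N) : Prop where
  isLinearMap : IsLinearMap k f

section LinInstances

variable {k}
variable {M N P Q : Type*} [AddCommMonoid M] [Module k M] [AddCommMonoid N] [Module k N]
  [AddCommMonoid P] [Module k P] [AddCommMonoid Q] [Module k Q]
variable {A : Type*} [Ring A] [Algebra k A]

instance Lin.id : Lin k (fun x : M => x) := ⟨⟨fun _ _ => rfl, fun _ _ => rfl⟩⟩

instance Lin.map (L : N →ₗ[k] P) (f : M → N) [hf : Lin k f] : Lin k (fun x => L (f x)) :=
  ⟨⟨fun x y => by rw [hf.1.map_add, map_add], fun c x => by rw [hf.1.map_smul, map_smul]⟩⟩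

instance Lin.map_fst (L : N →ₗ[k] P →ₗ[k] Q) (f : M → N) (p : P) [hf : Lin k f] :
    Lin k (fun x => L (f x) p) :=
  ⟨⟨fun x y => by rw [hf.1.map_add, map_add, LinearMap.add_apply],
    fun c x => by rw [hf.1.map_smul, map_smul, LinearMap.smul_apply]⟩⟩

-- `fun x => L x` eta-reduces to `⇑L`, where `Lin.map` with `f = id` does not unify; likewise below.
instance Lin.coe (L : N →ₗ[k] P) : Lin k (fun x => L x) := ⟨L.isLinear⟩

instance Lin.mul (a : A) : Lin k (fun x => a * x) := ⟨⟨mul_add a, fun c x => mul_smul_comm c a x⟩⟩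

instance Lin.tmul (p : P) : Lin k (fun x : N => p ⊗ₜ[k] x) :=
  ⟨⟨TensorProduct.tmul_add p, fun c x => TensorProduct.tmul_smul c p x⟩⟩

instance Lin.smul (c : k) : Lin k (fun x : N => c • x) :=
  ⟨⟨smul_add c, fun d x => smul_comm c d x⟩⟩

instance Lin.mul_right (f : M → A) (a : A) [hf : Lin k f] : Lin k (fun x => f x * a) :=
  ⟨⟨fun x y => by rw [hf.1.map_add, add_mul],
    fun c x => by rw [hf.1.map_smul, smul_mul_assoc]⟩⟩

instance Lin.mul_left (f : M → A) (a : A) [hf : Lin k f] : Lin k (fun x => a * f x) :=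
  ⟨⟨fun x y => by rw [hf.1.map_add, mul_add],
    fun c x => by rw [hf.1.map_smul, mul_smul_comm]⟩⟩

instance Lin.smul_fst (f : M → k) (n : N) [hf : Lin k f] : Lin k (fun x => f x • n) :=
  ⟨⟨fun x y => by rw [hf.1.map_add, add_smul],
    fun c x => by rw [hf.1.map_smul, smul_assoc]⟩⟩

instance Lin.smul_snd (c : k) (f : M → N) [hf : Lin k f] : Lin k (fun x => c • f x) :=
  ⟨⟨fun x y => by rw [hf.1.map_add, smul_add],
    fun d x => by rw [hf.1.map_smul, smul_comm]⟩⟩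

instance Lin.tmul_fst (f : M → N) (p : P) [hf : Lin k f] : Lin k (fun x => f x ⊗ₜ[k] p) :=
  ⟨⟨fun x y => by rw [hf.1.map_add, TensorProduct.add_tmul],
    fun c x => by rw [hf.1.map_smul, TensorProduct.smul_tmul']⟩⟩

instance Lin.tmul_snd (f : M → N) (p : P) [hf : Lin k f] : Lin k (fun x => p ⊗ₜ[k] f x) :=
  ⟨⟨fun x y => by rw [hf.1.map_add, TensorProduct.tmul_add],
    fun c x => by rw [hf.1.map_smul, TensorProduct.tmul_smul]⟩⟩

instance Lin.alg_smul_snd (c : k) (f : M → A) [hf : Lin k f] : Lin k (fun x => c • f x) :=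
  Lin.smul_snd c f

instance Lin.alg_smul_fst (f : M → k) (a : A) [hf : Lin k f] : Lin k (fun x => f x • a) :=
  Lin.smul_fst f a

theorem Lin.comp {f : N → P} {g : M → N} (hf : Lin k f) (hg : Lin k g) :
    Lin k (fun x => f (g x)) :=
  ⟨⟨fun x y => by rw [hg.1.map_add, hf.1.map_add],
    fun c x => by rw [hg.1.map_smul, hf.1.map_smul]⟩⟩

end LinInstances

variable {H : Type*} [Ring H] [Bialgebra k H]
variable {M N : Type*} [AddCommMonoid M] [Module k M] [AddCommMonoid N] [Module k N]
variable {A : Type*} [Ring A] [Algebra k A]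

theorem exists_rep2 (h : H) :
    ∃ p : Σ n : ℕ, (Fin n → H) × (Fin n → H), IsRep2 k H h p.2.1 p.2.2 := by
  obtain ⟨S, hS⟩ := TensorProduct.exists_finset (R := k) (Coalgebra.comul (R := k) h)
  refine ⟨⟨S.card, fun i => (S.equivFin.symm i).1.1, fun i => (S.equivFin.symm i).1.2⟩, ?_⟩
  rw [IsRep2, hS, ← Finset.sum_coe_sort S, ← S.equivFin.symm.sum_comp]

/-- The number of summands in a chosen expression of `Δh` as a sum of pure tensors. -/
def repLen (h : H) : ℕ := (exists_rep2 k h).choose.1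

/-- The left legs in the chosen expression of `Δh`. -/
def repL (h : H) : Fin (repLen k h) → H := (exists_rep2 k h).choose.2.1

/-- The right legs in the chosen expression of `Δh`. -/
def repR (h : H) : Fin (repLen k h) → H := (exists_rep2 k h).choose.2.2

theorem isRep2_rep (h : H) : IsRep2 k H h (repL k h) (repR k h) := (exists_rep2 k h).choose_spec

/-- The Sweedler sum `∑ f(h₍₁₎, h₍₂₎)`, computed from a chosen expression of `Δh`.  It is
independent of the choice when `f` is bilinear. -/
def sw (h : H) (f : H → H → M) : M := ∑ i, f (repL k h i) (repR k h i)

variable {k}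

theorem comul_eq_sw (h : H) : Coalgebra.comul (R := k) h = sw k h fun a b => a ⊗ₜ[k] b :=
  isRep2_rep k h

theorem sw_congr (h : H) {f g : H → H → M} (e : ∀ a b, f a b = g a b) : sw k h f = sw k h g := by
  simp only [sw, e]

theorem map_sw (L : M →ₗ[k] N) (h : H) (f : H → H → M) :
    L (sw k h f) = sw k h fun a b => L (f a b) := map_sum _ _ _

theorem map_sw_fst {P : Type*} [AddCommMonoid P] [Module k P] (L : M →ₗ[k] N →ₗ[k] P) (h : H)
    (f : H → H → M) (n : N) :
    L (sw k h f) n = sw k h fun a b => L (f a b) n := by simp [sw]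

theorem sw_mul (h : H) (f : H → H → A) (x : A) :
    sw k h f * x = sw k h fun a b => f a b * x := Finset.sum_mul _ _ _

theorem mul_sw (h : H) (f : H → H → A) (x : A) :
    x * sw k h f = sw k h fun a b => x * f a b := Finset.mul_sum _ _ _

theorem sw_tmul (h : H) (f : H → H → M) (x : N) :
    sw k h f ⊗ₜ[k] x = sw k h fun a b => f a b ⊗ₜ[k] x := TensorProduct.sum_tmul _ _ _

theorem tmul_sw (h : H) (f : H → H → M) (x : N) :
    x ⊗ₜ[k] sw k h f = sw k h fun a b => x ⊗ₜ[k] f a b := TensorProduct.tmul_sum _ _ _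

theorem smul_sw (h : H) (f : H → H → M) (c : k) :
    c • sw k h f = sw k h fun a b => c • f a b := Finset.smul_sum

theorem sw_comm (h g : H) (f : H → H → H → H → M) :
    (sw k h fun a b => sw k g fun c d => f a b c d)
      = sw k g fun c d => sw k h fun a b => f a b c d := Finset.sum_comm

theorem exists_lift2 {V W : Type*} [AddCommMonoid V] [Module k V] [AddCommMonoid W] [Module k W]
    (f : V → W → M) [h1 : ∀ b, Lin k fun a => f a b] [h2 : ∀ a, Lin k fun b => f a b] :
    ∃ L : V ⊗[k] W →ₗ[k] M, ∀ a b, L (a ⊗ₜ b) = f a b :=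
  ⟨TensorProduct.lift (LinearMap.mk₂ k f (fun a b c => (h1 c).1.map_add a b)
    (fun c a b => (h1 b).1.map_smul c a) (fun a b c => (h2 a).1.map_add b c)
    (fun c a b => (h2 a).1.map_smul c b)), fun _ _ => rfl⟩

theorem exists_lift3 (f : H → H → H → M) [h1 : ∀ b c, Lin k fun a => f a b c]
    [h2 : ∀ a c, Lin k fun b => f a b c] [h3 : ∀ a b, Lin k fun c => f a b c] :
    ∃ L : (H ⊗[k] H) ⊗[k] H →ₗ[k] M, ∀ a b c, L (a ⊗ₜ b ⊗ₜ c) = f a b c := by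
  choose L hL using fun c => exists_lift2 (k := k) (fun a b => f a b c)
  have e1 : ∀ b, Lin k (fun x => L b x) := fun b => inferInstance
  have e2 : ∀ x, Lin k (fun b => L b x) := fun x => by
    constructor
    constructor
    · intro c d
      induction x using TensorProduct.induction_on with
      | zero => simp
      | tmul a b => simp only [hL]; exact (h3 a b).1.map_add c d
      | add x y hx hy => simp only [map_add, hx, hy]; abel
    · intro r c
      induction x using TensorProduct.induction_on with
      | zero => simp
      | tmul a b => simp only [hL]; exact (h3 a b).1.map_smul r c
      | add x y hx hy => simp only [map_add, hx, hy, smul_add]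
  obtain ⟨K, hK⟩ := exists_lift2 (k := k) (fun x c => L c x)
  exact ⟨K, fun a b c => by rw [hK, hL]⟩

theorem exists_lift4 (f : H → H → H → H → M) [h1 : ∀ b c d, Lin k fun a => f a b c d]
    [h2 : ∀ a c d, Lin k fun b => f a b c d] [h3 : ∀ a b d, Lin k fun c => f a b c d]
    [h4 : ∀ a b c, Lin k fun d => f a b c d] :
    ∃ L : ((H ⊗[k] H) ⊗[k] H) ⊗[k] H →ₗ[k] M, ∀ a b c d, L (a ⊗ₜ b ⊗ₜ c ⊗ₜ d) = f a b c d := by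
  choose L hL using fun d => exists_lift3 (k := k) (fun a b c => f a b c d)
  have e1 : ∀ b, Lin k (fun x => L b x) := fun b => inferInstance
  have e2 : ∀ x, Lin k (fun b => L b x) := fun x => by
    constructor
    constructor
    · intro c d
      induction x using TensorProduct.induction_on with
      | zero => simp
      | add x y hx hy => simp only [map_add, hx, hy]; abel
      | tmul x z =>
        induction x using TensorProduct.induction_on with
        | zero => simp
        | add x y hx hy => simp only [map_add, TensorProduct.add_tmul, hx, hy]; abel
        | tmul a b => simp only [hL]; exact (h4 a b z).1.map_add c d
    · intro r c
      induction x using TensorProduct.induction_on with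
      | zero => simp
      | add x y hx hy => simp only [map_add, hx, hy, smul_add]
      | tmul x z =>
        induction x using TensorProduct.induction_on with
        | zero => simp
        | add x y hx hy => simp only [map_add, TensorProduct.add_tmul, hx, hy, smul_add]
        | tmul a b => simp only [hL]; exact (h4 a b z).1.map_smul r c
  obtain ⟨K, hK⟩ := exists_lift2 (k := k) (fun x c => L c x)
  exact ⟨K, fun a b c d => by rw [hK, hL]⟩

/-- A Sweedler sum of a bilinear map factors through the comultiplication. -/
theorem exists_sw_eq (f : H → H → M) [∀ b, Lin k fun a => f a b] [∀ a, Lin k fun b => f a b] :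
    ∃ L : H ⊗[k] H →ₗ[k] M, (∀ a b, L (a ⊗ₜ b) = f a b) ∧
      ∀ h, sw k h f = L (Coalgebra.comul (R := k) h) := by
  obtain ⟨L, hL⟩ := exists_lift2 (k := k) f
  exact ⟨L, hL, fun h => by rw [comul_eq_sw, map_sw]; simp only [hL]⟩

instance Lin.sw_arg (f : H → H → M) [∀ b, Lin k fun a => f a b] [∀ a, Lin k fun b => f a b] :
    Lin k (fun h => sw k h f) := by
  obtain ⟨L, -, hL⟩ := exists_sw_eq (k := k) f
  simp only [hL]
  infer_instance

instance Lin.sw_arg_comp (g : N → H) (f : H → H → M) [hg : Lin k g] [∀ b, Lin k fun a => f a b]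
    [∀ a, Lin k fun b => f a b] : Lin k (fun x => sw k (g x) f) := by
  obtain ⟨L, -, hL⟩ := exists_sw_eq (k := k) f
  simp only [hL]
  infer_instance

instance Lin.sw_body (h : H) (f : N → H → H → M) [hf : ∀ a b, Lin k fun x => f x a b] :
    Lin k (fun x => sw k h (f x)) :=
  ⟨⟨fun x y => by simp only [sw, (hf _ _).1.map_add, Finset.sum_add_distrib],
    fun c x => by simp only [sw, (hf _ _).1.map_smul, Finset.smul_sum]⟩⟩

theorem sum_rep3 {n : ℕ} {h : H} {h1 h2 h3 : Fin n → H} (hr : IsRep3 k H h h1 h2 h3)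
    (f : H → H → H → M) [∀ b c, Lin k fun a => f a b c]
    [∀ a c, Lin k fun b => f a b c] [∀ a b, Lin k fun c => f a b c] :
    ∑ i, f (h1 i) (h2 i) (h3 i) = sw k h fun t c => sw k t fun a b => f a b c := by
  obtain ⟨L, hL⟩ := exists_lift3 (k := k) f
  have := congrArg L hr
  simp only [map_sum, hL] at this
  rw [← this, Δ3, LinearMap.comp_apply, comul_eq_sw, map_sw, map_sw]
  refine sw_congr _ fun t c => ?_
  rw [LinearMap.rTensor_tmul, comul_eq_sw, sw_tmul, map_sw]
  simp only [hL]

theorem sum_rep4 {n : ℕ} {h : H} {h1 h2 h3 h4 : Fin n → H} (hr : IsRep4 k H h h1 h2 h3 h4)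
    (f : H → H → H → H → M) [∀ b c d, Lin k fun a => f a b c d]
    [∀ a c d, Lin k fun b => f a b c d] [∀ a b d, Lin k fun c => f a b c d]
    [∀ a b c, Lin k fun d => f a b c d] :
    ∑ i, f (h1 i) (h2 i) (h3 i) (h4 i)
      = sw k h fun u d => sw k u fun t c => sw k t fun a b => f a b c d := by
  obtain ⟨L, hL⟩ := exists_lift4 (k := k) f
  have := congrArg L hr
  simp only [map_sum, hL] at this
  rw [← this, Δ4, LinearMap.comp_apply, comul_eq_sw, map_sw, map_sw]
  refine sw_congr _ fun u d => ?_
  rw [LinearMap.rTensor_tmul, Δ3, LinearMap.comp_apply, comul_eq_sw, map_sw, sw_tmul, map_sw]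
  refine sw_congr _ fun t c => ?_
  rw [LinearMap.rTensor_tmul, comul_eq_sw, sw_tmul, sw_tmul, map_sw]
  simp only [hL]

theorem exists_rep_of_tmul {V W : Type*} [AddCommMonoid V] [Module k V] [AddCommMonoid W]
    [Module k W] (x : V ⊗[k] W) :
    ∃ (n : ℕ) (a : Fin n → V) (b : Fin n → W), x = ∑ i, a i ⊗ₜ[k] b i := by
  obtain ⟨S, hS⟩ := TensorProduct.exists_finset x
  refine ⟨S.card, fun i => (S.equivFin.symm i).1.1, fun i => (S.equivFin.symm i).1.2, ?_⟩
  rw [hS, ← Finset.sum_coe_sort S, ← S.equivFin.symm.sum_comp]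

theorem exists_rep3 (x : (H ⊗[k] H) ⊗[k] H) :
    ∃ (n : ℕ) (h1 h2 h3 : Fin n → H), x = ∑ i, (h1 i ⊗ₜ[k] h2 i) ⊗ₜ[k] h3 i := by
  obtain ⟨n, a, b, rfl⟩ := exists_rep_of_tmul x
  choose m c d hcd using fun i => exists_rep_of_tmul (a i)
  refine ⟨∑ i, m i, fun j => c _ (finSigmaFinEquiv.symm j).2,
    fun j => d _ (finSigmaFinEquiv.symm j).2, fun j => b (finSigmaFinEquiv.symm j).1, ?_⟩
  rw [finSigmaFinEquiv.symm.sum_comp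
    (fun p : (i : Fin n) × Fin (m i) => (c p.1 p.2 ⊗ₜ[k] d p.1 p.2) ⊗ₜ[k] b p.1),
    Fintype.sum_sigma]
  simp only [← TensorProduct.sum_tmul, ← hcd]

theorem exists_rep4 (x : ((H ⊗[k] H) ⊗[k] H) ⊗[k] H) :
    ∃ (n : ℕ) (h1 h2 h3 h4 : Fin n → H),
      x = ∑ i, ((h1 i ⊗ₜ[k] h2 i) ⊗ₜ[k] h3 i) ⊗ₜ[k] h4 i := by
  obtain ⟨n, a, b, rfl⟩ := exists_rep_of_tmul x
  choose m c d e hcd using fun i => exists_rep3 (a i)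
  refine ⟨∑ i, m i, fun j => c _ (finSigmaFinEquiv.symm j).2,
    fun j => d _ (finSigmaFinEquiv.symm j).2, fun j => e _ (finSigmaFinEquiv.symm j).2,
    fun j => b (finSigmaFinEquiv.symm j).1, ?_⟩
  rw [finSigmaFinEquiv.symm.sum_comp
    (fun p : (i : Fin n) × Fin (m i) =>
      ((c p.1 p.2 ⊗ₜ[k] d p.1 p.2) ⊗ₜ[k] e p.1 p.2) ⊗ₜ[k] b p.1),
    Fintype.sum_sigma]
  simp only [← TensorProduct.sum_tmul, ← hcd]

/-- Coassociativity. -/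
theorem sw_coassoc (h : H) (f : H → H → H → M) [∀ b c, Lin k fun a => f a b c]
    [∀ a c, Lin k fun b => f a b c] [∀ a b, Lin k fun c => f a b c] :
    (sw k h fun t c => sw k t fun a b => f a b c)
      = sw k h fun a s => sw k s fun b c => f a b c := by
  obtain ⟨L, hL⟩ := exists_lift3 (k := k) f
  have e := congrArg L ((TensorProduct.assoc k H H H).symm_apply_eq.2
    (Coalgebra.coassoc_apply (R := k) h).symm)
  rw [comul_eq_sw] at e
  simp only [map_sw, LinearMap.rTensor_tmul, LinearMap.lTensor_tmul] at e
  rw [← LinearEquiv.coe_coe] at e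
  simp only [comul_eq_sw, map_sw, sw_tmul, tmul_sw, LinearEquiv.coe_coe,
    TensorProduct.assoc_symm_tmul, hL] at e
  exact e.symm

/-- The two bracketings `((a,b),(c,d))` and `(a,((b,c),d))` of four legs agree. -/
theorem sw_coassoc4 (h : H) (f : H → H → H → H → M) [∀ b c d, Lin k fun a => f a b c d]
    [∀ a c d, Lin k fun b => f a b c d] [∀ a b d, Lin k fun c => f a b c d]
    [∀ a b c, Lin k fun d => f a b c d] :
    (sw k h fun m n => sw k m fun a b => sw k n fun c d => f a b c d)
      = sw k h fun a s => sw k s fun t d => sw k t fun b c => f a b c d := by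
  rw [sw_coassoc h fun a b n => sw k n fun c d => f a b c d]
  refine sw_congr _ fun a s => ?_
  exact (sw_coassoc s fun b c d => f a b c d).symm

theorem sw_counit_left (h : H) (f : H → M) [hf : Lin k f] :
    (sw k h fun a b => Coalgebra.counit (R := k) a • f b) = f h := by
  have : sw k h (fun a b : H => Coalgebra.counit (R := k) a • b) = h := by
    have := congrArg (TensorProduct.lid k H) (Coalgebra.rTensor_counit_comul (R := k) h)
    rw [comul_eq_sw, map_sw, ← LinearEquiv.coe_coe, map_sw] at this
    simpa using this
  conv_rhs => rw [← this]
  exact ((map_sw hf.1.mk' h _).trans (sw_congr _ fun a b => by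
    simp [IsLinearMap.mk'_apply])).symm

theorem sw_counit_right (h : H) (f : H → M) [hf : Lin k f] :
    (sw k h fun a b => Coalgebra.counit (R := k) b • f a) = f h := by
  have : sw k h (fun a b : H => Coalgebra.counit (R := k) b • a) = h := by
    have := congrArg (TensorProduct.rid k H) (Coalgebra.lTensor_counit_comul (R := k) h)
    rw [comul_eq_sw, map_sw, ← LinearEquiv.coe_coe, map_sw] at this
    simpa using this
  conv_rhs => rw [← this]
  exact ((map_sw hf.1.mk' h _).trans (sw_congr _ fun a b => by
    simp [IsLinearMap.mk'_apply])).symm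

theorem sw_one (f : H → H → M) [∀ b, Lin k fun a => f a b] [∀ a, Lin k fun b => f a b] :
    sw k (1 : H) f = f 1 1 := by
  obtain ⟨L, hL, hs⟩ := exists_sw_eq (k := k) f
  rw [hs, Bialgebra.comul_one, Algebra.TensorProduct.one_def, hL]

theorem sw_arg_mul (h g : H) (f : H → H → M) [∀ b, Lin k fun a => f a b]
    [∀ a, Lin k fun b => f a b] :
    sw k (h * g) f = sw k h fun h1 h2 => sw k g fun g1 g2 => f (h1 * g1) (h2 * g2) := by
  obtain ⟨L, hL, hs⟩ := exists_sw_eq (k := k) f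
  rw [hs, Bialgebra.comul_mul, comul_eq_sw, comul_eq_sw, sw_mul, map_sw]
  simp only [mul_sw, map_sw, Algebra.TensorProduct.tmul_mul_tmul, hL]

theorem sw_arg_smul (c : k) (h : H) (f : H → H → M) [∀ b, Lin k fun a => f a b]
    [∀ a, Lin k fun b => f a b] : sw k (c • h) f = c • sw k h f :=
  (inferInstance : Lin k fun h => sw k h f).1.map_smul c h

theorem Lin.map_smul' {f : M → N} (hf : Lin k f) (c : k) (x : M) : f (c • x) = c • f x :=
  hf.1.map_smul c x

theorem Lin.map_sw {f : M → N} (hf : Lin k f) (h : H) (g : H → H → M) :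
    f (sw k h g) = sw k h fun a b => f (g a b) :=
  _root_.map_sw hf.1.mk' h g

end SweedlerCalculus

/-! ### The convolution algebra of `H ⊗ H ⊗ H` -/

section Convolution

variable {k : Type*} [Field k] {H : Type*} [Ring H] [Bialgebra k H]
variable {B : Type*} [Ring B] [Algebra k B]

/-- Trilinear maps on `H` are elements of the convolution algebra of `H ⊗ (H ⊗ H)`. -/
theorem exists_conv (f : H → H → H → B) [∀ b c, Lin k fun a => f a b c]
    [∀ a c, Lin k fun b => f a b c] [∀ a b, Lin k fun c => f a b c] :
    ∃ F : WithConv (H ⊗[k] (H ⊗[k] H) →ₗ[k] B),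
      ∀ x y z, F.ofConv (x ⊗ₜ (y ⊗ₜ z)) = f x y z := by
  obtain ⟨L, hL⟩ := exists_lift3 (k := k) f
  exact ⟨WithConv.toConv (L ∘ₗ (TensorProduct.assoc k H H H).symm.toLinearMap),
    fun x y z => by simp [hL]⟩

theorem conv_ext {F G : WithConv (H ⊗[k] (H ⊗[k] H) →ₗ[k] B)}
    (e : ∀ x y z, F.ofConv (x ⊗ₜ (y ⊗ₜ z)) = G.ofConv (x ⊗ₜ (y ⊗ₜ z))) : F = G := by
  apply WithConv.ext
  refine TensorProduct.ext' fun x t => ?_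
  induction t using TensorProduct.induction_on with
  | zero => simp
  | tmul y z => exact e x y z
  | add s t hs ht => rw [TensorProduct.tmul_add, map_add, map_add, hs, ht]

theorem conv_one_apply (x y z : H) :
    (1 : WithConv (H ⊗[k] (H ⊗[k] H) →ₗ[k] B)).ofConv (x ⊗ₜ (y ⊗ₜ z))
      = Coalgebra.counit (R := k) x • Coalgebra.counit (R := k) y •
          Coalgebra.counit (R := k) z • (1 : B) := by
  rw [LinearMap.convOne_def]
  simp [Algebra.algebraMap_eq_smul_one, smul_smul, mul_comm]

theorem conv_mul_apply (F G : WithConv (H ⊗[k] (H ⊗[k] H) →ₗ[k] B)) (x y z : H) :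
    (F * G).ofConv (x ⊗ₜ (y ⊗ₜ z))
      = sw k x fun x1 x2 => sw k y fun y1 y2 => sw k z fun z1 z2 =>
          F.ofConv (x1 ⊗ₜ (y1 ⊗ₜ z1)) * G.ofConv (x2 ⊗ₜ (y2 ⊗ₜ z2)) := by
  rw [LinearMap.convMul_apply, TensorProduct.comul_tmul, TensorProduct.comul_tmul,
    comul_eq_sw x, comul_eq_sw y, comul_eq_sw z]
  simp only [sw, TensorProduct.sum_tmul, TensorProduct.tmul_sum, map_sum,
    TensorProduct.AlgebraTensorModule.tensorTensorTensorComm_tmul, TensorProduct.map_tmul,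
    LinearMap.mul'_apply]
  rw [Finset.sum_comm]
  conv_rhs => rw [Finset.sum_comm]
  refine Finset.sum_congr rfl fun _ _ => ?_
  exact Finset.sum_comm

theorem conv_mul_apply_left (D G : WithConv (H ⊗[k] (H ⊗[k] H) →ₗ[k] B)) (d : H → H → B)
    (hD : ∀ x y z, D.ofConv (x ⊗ₜ (y ⊗ₜ z)) = Coalgebra.counit (R := k) z • d x y) (x y z : H) :
    (D * G).ofConv (x ⊗ₜ (y ⊗ₜ z))
      = sw k x fun x1 x2 => sw k y fun y1 y2 => d x1 y1 * G.ofConv (x2 ⊗ₜ (y2 ⊗ₜ z)) := by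
  rw [conv_mul_apply]
  refine sw_congr _ fun x1 x2 => sw_congr _ fun y1 y2 => ?_
  simp only [hD, smul_mul_assoc]
  exact sw_counit_left z fun z2 => d x1 y1 * G.ofConv (x2 ⊗ₜ (y2 ⊗ₜ z2))

theorem conv_mul_apply_right (D G : WithConv (H ⊗[k] (H ⊗[k] H) →ₗ[k] B)) (d : H → H → B)
    (hD : ∀ x y z, D.ofConv (x ⊗ₜ (y ⊗ₜ z)) = Coalgebra.counit (R := k) z • d x y) (x y z : H) :
    (G * D).ofConv (x ⊗ₜ (y ⊗ₜ z))
      = sw k x fun x1 x2 => sw k y fun y1 y2 => G.ofConv (x1 ⊗ₜ (y1 ⊗ₜ z)) * d x2 y2 := by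
  rw [conv_mul_apply]
  refine sw_congr _ fun x1 x2 => sw_congr _ fun y1 y2 => ?_
  simp only [hD, mul_smul_comm]
  exact sw_counit_right z fun z2 => G.ofConv (x1 ⊗ₜ (y1 ⊗ₜ z2)) * d x2 y2

end Convolution

/-! ### Cocycle data in the convolution algebra -/

section Datum

variable {k : Type*} [Field k] {H : Type*} [Ring H] [Bialgebra k H]
variable {B : Type*} [Ring B] [Algebra k B]
variable {act : H →ₗ[k] B →ₗ[k] B} {σ σi : H →ₗ[k] H →ₗ[k] B}

theorem CocycleDatum.act_mul_sw (hcd : CocycleDatum k H B act σ σi) (h : H) (a b : B) :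
    act h (a * b) = sw k h fun h1 h2 => act h1 a * act h2 b :=
  hcd.toMeasuring.act_mul h a b _ _ (isRep2_rep k h)

theorem CocycleDatum.conv_left_sw (hcd : CocycleDatum k H B act σ σi) (h g : H) :
    (sw k h fun h1 h2 => sw k g fun g1 g2 => σ h1 g1 * σi h2 g2)
      = (Coalgebra.counit (R := k) h * Coalgebra.counit (R := k) g) • (1 : B) :=
  hcd.conv_left h g _ _ _ _ (isRep2_rep k h) (isRep2_rep k g)

theorem CocycleDatum.conv_right_sw (hcd : CocycleDatum k H B act σ σi) (h g : H) :
    (sw k h fun h1 h2 => sw k g fun g1 g2 => σi h1 g1 * σ h2 g2)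
      = (Coalgebra.counit (R := k) h * Coalgebra.counit (R := k) g) • (1 : B) :=
  hcd.conv_right h g _ _ _ _ (isRep2_rep k h) (isRep2_rep k g)

theorem CocycleDatum.cocycle_sw (hcd : CocycleDatum k H B act σ σi) (h g f : H) :
    (sw k h fun h1 h2 => sw k g fun g1 g2 => sw k f fun f1 f2 =>
        act h1 (σ g1 f1) * σ h2 (g2 * f2))
      = sw k h fun h1 h2 => sw k g fun g1 g2 => σ h1 g1 * σ (h2 * g2) f :=
  hcd.cocycle h g f _ _ _ _ _ _ (isRep2_rep k h) (isRep2_rep k g) (isRep2_rep k f)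

theorem CocycleDatum.act_act_sw (hcd : CocycleDatum k H B act σ σi) (h g : H) (b : B) :
    act h (act g b) = sw k h fun t h3 => sw k g fun u g3 =>
      (sw k t fun h1 h2 => sw k u fun g1 g2 => σ h1 g1 * act (h2 * g2) b) * σi h3 g3 := by
  obtain ⟨n, h1, h2, h3, hh⟩ := exists_rep3 (Δ3 k H h)
  obtain ⟨m, g1, g2, g3, hg⟩ := exists_rep3 (Δ3 k H g)
  rw [hcd.act_act h g b h1 h2 h3 g1 g2 g3 hh hg]
  have key : ∀ i, ∑ j, σ (h1 i) (g1 j) * act (h2 i * g2 j) b * σi (h3 i) (g3 j)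
      = sw k g fun t c => sw k t fun x y => σ (h1 i) x * act (h2 i * y) b * σi (h3 i) c :=
    fun i => sum_rep3 (k := k) hg fun x y z => σ (h1 i) x * act (h2 i * y) b * σi (h3 i) z
  simp only [key]
  rw [sum_rep3 (k := k) hh fun p q r => sw k g fun t c => sw k t fun x y =>
    σ p x * act (q * y) b * σi r c]
  refine sw_congr _ fun t h3 => ?_
  rw [sw_comm]
  refine sw_congr _ fun u g3 => ?_
  simp only [sw_mul]

theorem CocycleDatum.sigmai_one (hcd : CocycleDatum k H B act σ σi) (h : H) :
    σi h 1 = Coalgebra.counit (R := k) h • (1 : B) := by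
  have e := hcd.conv_left_sw h 1
  simp only [sw_one (fun g1 g2 => σ _ g1 * σi _ g2), hcd.sigma_one, smul_mul_assoc, one_mul] at e
  rw [sw_counit_left h fun x => σi x 1] at e
  simpa using e

theorem CocycleDatum.one_sigmai (hcd : CocycleDatum k H B act σ σi) (h : H) :
    σi 1 h = Coalgebra.counit (R := k) h • (1 : B) := by
  have e := hcd.conv_left_sw 1 h
  rw [sw_one (fun h1 h2 => sw k h fun g1 g2 => σ h1 g1 * σi h2 g2)] at e
  simp only [hcd.one_sigma, smul_mul_assoc, one_mul] at e
  rw [sw_counit_left h fun x => σi 1 x] at e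
  simpa using e

/-- The elements `h▷σ^{±1}(g,f)`, `σ^{±1}(h,gf)`, `σ^{±1}(h,g)ε(f)`, `σ^{±1}(hg,f)` and
`((hg)▷b)ε(f)` of the convolution algebra `Hom(H ⊗ H ⊗ H, B)` and the relations between them
which encode the cocycle condition, the convolution invertibility of `σ` and the associative
type. -/
theorem CocycleDatum.exists_conv_relations (hcd : CocycleDatum k H B act σ σi)
    (hassoc : ∀ (h g : H) (b : B), act h (act g b) = act (h * g) b) (b : B) :
    ∃ α α' β β' δ δ' η η' κ : WithConv (H ⊗[k] (H ⊗[k] H) →ₗ[k] B),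
      (∀ x y z, α.ofConv (x ⊗ₜ (y ⊗ₜ z)) = act x (σ y z)) ∧
      (∀ x y z, α'.ofConv (x ⊗ₜ (y ⊗ₜ z)) = act x (σi y z)) ∧
      (∀ x y z, β.ofConv (x ⊗ₜ (y ⊗ₜ z)) = σ x (y * z)) ∧
      (∀ x y z, β'.ofConv (x ⊗ₜ (y ⊗ₜ z)) = σi x (y * z)) ∧
      (∀ x y z, δ.ofConv (x ⊗ₜ (y ⊗ₜ z)) = Coalgebra.counit (R := k) z • σ x y) ∧
      (∀ x y z, δ'.ofConv (x ⊗ₜ (y ⊗ₜ z)) = Coalgebra.counit (R := k) z • σi x y) ∧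
      (∀ x y z, η.ofConv (x ⊗ₜ (y ⊗ₜ z)) = σ (x * y) z) ∧
      (∀ x y z, η'.ofConv (x ⊗ₜ (y ⊗ₜ z)) = σi (x * y) z) ∧
      (∀ x y z, κ.ofConv (x ⊗ₜ (y ⊗ₜ z)) = Coalgebra.counit (R := k) z • act (x * y) b) ∧
      α * β = δ * η ∧ α' * α = 1 ∧ β * β' = 1 ∧ δ' * δ = 1 ∧ η * η' = 1 ∧ δ * κ * δ' = κ := by
  obtain ⟨α, hα⟩ := exists_conv (k := k) fun x y z : H => act x (σ y z)
  obtain ⟨α', hα'⟩ := exists_conv (k := k) fun x y z : H => act x (σi y z)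
  obtain ⟨β, hβ⟩ := exists_conv (k := k) fun x y z : H => σ x (y * z)
  obtain ⟨β', hβ'⟩ := exists_conv (k := k) fun x y z : H => σi x (y * z)
  obtain ⟨δ, hδ⟩ := exists_conv (k := k) fun x y z : H => Coalgebra.counit (R := k) z • σ x y
  obtain ⟨δ', hδ'⟩ := exists_conv (k := k) fun x y z : H => Coalgebra.counit (R := k) z • σi x y
  obtain ⟨η, hη⟩ := exists_conv (k := k) fun x y z : H => σ (x * y) z
  obtain ⟨η', hη'⟩ := exists_conv (k := k) fun x y z : H => σi (x * y) z
  obtain ⟨κ, hκ⟩ := exists_conv (k := k) fun x y z : H =>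
    Coalgebra.counit (R := k) z • act (x * y) b
  refine ⟨α, α', β, β', δ, δ', η, η', κ, hα, hα', hβ, hβ', hδ, hδ', hη, hη', hκ,
    ?_, ?_, ?_, ?_, ?_, ?_⟩ <;> refine conv_ext fun x y z => ?_
  · rw [conv_mul_apply, conv_mul_apply_left δ η _ hδ]
    simp only [hα, hβ, hη]
    exact hcd.cocycle_sw x y z
  · rw [conv_mul_apply, conv_one_apply]
    simp only [hα, hα']
    rw [sw_comm]
    trans sw k y fun y1 y2 => sw k z fun z1 z2 => act x (σi y1 z1 * σ y2 z2)
    · refine sw_congr _ fun y1 y2 => ?_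
      rw [sw_comm]
      simp only [hcd.act_mul_sw]
    · simp only [← map_sw]
      rw [hcd.conv_right_sw, map_smul, hcd.toMeasuring.act_one, smul_smul, smul_smul, smul_smul]
      congr 1; ring
  · rw [conv_mul_apply, conv_one_apply]
    simp only [hβ, hβ']
    have key : ∀ p q, (sw k y fun y1 y2 => sw k z fun z1 z2 =>
        σ p (y1 * z1) * σi q (y2 * z2)) = sw k (y * z) fun s t => σ p s * σi q t :=
      fun p q => (sw_arg_mul y z fun s t => σ p s * σi q t).symm
    simp only [key]
    rw [hcd.conv_left_sw, Bialgebra.counit_mul, smul_smul, smul_smul, mul_assoc]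
  · rw [conv_mul_apply_left δ' δ _ hδ', conv_one_apply]
    simp only [hδ, mul_smul_comm, ← smul_sw]
    rw [hcd.conv_right_sw, smul_smul, smul_smul, smul_smul]
    congr 1; ring
  · rw [conv_mul_apply, conv_one_apply]
    simp only [hη, hη']
    rw [← sw_arg_mul x y fun s t => sw k z fun z1 z2 => σ s z1 * σi t z2,
      hcd.conv_left_sw, Bialgebra.counit_mul, smul_smul, smul_smul]
  · rw [conv_mul_apply_right δ' (δ * κ) _ hδ', hκ, ← hassoc, hcd.act_act_sw]
    simp only [conv_mul_apply_left δ κ _ hδ, hκ, mul_smul_comm, smul_mul_assoc, ← smul_sw]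

/-- The convolution identity `σ⁻¹(x,y) * ((xy)▷b) * (x▷σ(y,z)) = ((xy)▷b) * σ(xy,z) * σ⁻¹(x,yz)`. -/
theorem CocycleDatum.identity_one (hcd : CocycleDatum k H B act σ σi)
    (hassoc : ∀ (h g : H) (b : B), act h (act g b) = act (h * g) b) (b : B) (x y z : H) :
    (sw k x fun x1 x' => sw k y fun y1 y' => σi x1 y1 *
        sw k x' fun x2 x3 => sw k y' fun y2 y3 => act (x2 * y2) b * act x3 (σ y3 z))
      = sw k x fun x1 x' => sw k y fun y1 y' => act (x1 * y1) b *
        sw k x' fun x2 x3 => sw k y' fun y2 y3 => sw k z fun z1 z2 =>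
          σ (x2 * y2) z1 * σi x3 (y3 * z2) := by
  obtain ⟨α, α', β, β', δ, δ', η, η', κ, hα, hα', hβ, hβ', hδ, hδ', hη, hη', hκ,
    e1, e2, e3, e4, e5, e6⟩ := hcd.exists_conv_relations hassoc b
  have e : δ' * (κ * α) = κ * (η * β') := by
    have hα1 : α = δ * η * β' := by rw [← e1, mul_assoc, e3, mul_one]
    calc δ' * (κ * α) = δ' * ((δ * κ * δ') * α) := by rw [e6]
      _ = (δ' * δ) * κ * (δ' * δ) * (η * β') := by rw [hα1]; simp only [mul_assoc]
      _ = κ * (η * β') := by rw [e4, one_mul, mul_one]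
  have key := congrArg (fun F => F.ofConv (x ⊗ₜ (y ⊗ₜ z))) e
  simp only [conv_mul_apply_left δ' _ _ hδ', conv_mul_apply_left κ _ _ hκ, conv_mul_apply η,
    hα, hη, hβ'] at key
  exact key

/-- The convolution identity `(x▷σ⁻¹(y,z)) * ((xy)▷b) * σ(x,y) = σ(x,yz) * σ⁻¹(xy,z) * ((xy)▷b)`. -/
theorem CocycleDatum.identity_two (hcd : CocycleDatum k H B act σ σi)
    (hassoc : ∀ (h g : H) (b : B), act h (act g b) = act (h * g) b) (b : B) (x y z : H) :
    (sw k x fun x1 x' => sw k y fun y1 y' => act x1 (σi y1 z) *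
        sw k x' fun x2 x3 => sw k y' fun y2 y3 => act (x2 * y2) b * σ x3 y3)
      = sw k x fun x1 x' => sw k y fun y1 y' => sw k z fun z1 z' => σ x1 (y1 * z1) *
        sw k x' fun x2 x3 => sw k y' fun y2 y3 => σi (x2 * y2) z' * act (x3 * y3) b := by
  obtain ⟨α, α', β, β', δ, δ', η, η', κ, hα, hα', hβ, hβ', hδ, hδ', hη, hη', hκ,
    e1, e2, e3, e4, e5, e6⟩ := hcd.exists_conv_relations hassoc b
  have e : α' * (κ * δ) = β * (η' * κ) := by
    calc α' * (κ * δ) = α' * ((δ * κ * δ') * δ) := by rw [e6]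
      _ = α' * (δ * (η * η')) * κ * (δ' * δ) := by rw [e5, mul_one]; simp only [mul_assoc]
      _ = (α' * α) * β * η' * κ := by
        rw [e4, mul_one, ← mul_assoc δ, ← e1]; simp only [mul_assoc]
      _ = β * (η' * κ) := by rw [e2, one_mul, mul_assoc]
  have hκδ : ∀ x y z, (κ * δ).ofConv (x ⊗ₜ (y ⊗ₜ z)) = Coalgebra.counit (R := k) z •
      sw k x fun x2 x3 => sw k y fun y2 y3 => act (x2 * y2) b * σ x3 y3 := fun x y z => by
    rw [conv_mul_apply_left κ _ _ hκ]
    simp only [hδ, mul_smul_comm, ← smul_sw]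
  have key := congrArg (fun F => F.ofConv (x ⊗ₜ (y ⊗ₜ z))) e
  simp only [conv_mul_apply_right _ _ _ hκδ, conv_mul_apply β, conv_mul_apply_right _ _ _ hκ,
    hα', hη', hβ] at key
  exact key

end Datum

section Statements

variable {k : Type*} [Field k]
variable {H : Type*} [Ring H] [HopfAlgebra k H]
variable {B : Type*} [Ring B] [Algebra k B]

local notation "𝑺" => HopfAlgebra.antipode (R := k)

/-! ### Sweedler sums and the antipode -/

section HopfSweedler

variable {M : Type*} [AddCommMonoid M] [Module k M]

theorem sw_antipode_mul (h : H) (f : H → M) [hf : Lin k f] :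
    (sw k h fun a b => f (𝑺 a * b)) = Coalgebra.counit (R := k) h • f 1 := by
  have e := HopfAlgebra.mul_antipode_rTensor_comul_apply (R := k) h
  rw [comul_eq_sw, map_sw, map_sw, Algebra.algebraMap_eq_smul_one] at e
  simp only [LinearMap.rTensor_tmul, LinearMap.mul'_apply] at e
  rw [← hf.map_smul', ← e, hf.map_sw]

theorem sw_mul_antipode (h : H) (f : H → M) [hf : Lin k f] :
    (sw k h fun a b => f (a * 𝑺 b)) = Coalgebra.counit (R := k) h • f 1 := by
  have e := HopfAlgebra.mul_antipode_lTensor_comul_apply (R := k) h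
  rw [comul_eq_sw, map_sw, map_sw, Algebra.algebraMap_eq_smul_one] at e
  simp only [LinearMap.lTensor_tmul, LinearMap.mul'_apply] at e
  rw [← hf.map_smul', ← e, hf.map_sw]

/-- Cancellation of the two inner legs: `∑ f(S(h₍₂₎)h₍₃₎, h₍₁₎, h₍₄₎) = ∑ f(1, h₍₁₎, h₍₂₎)`. -/
theorem sw_telescope (h : H) (f : H → H → H → M) [∀ b c, Lin k fun a => f a b c]
    [∀ a c, Lin k fun b => f a b c] [∀ a b, Lin k fun c => f a b c] :
    (sw k h fun p q => sw k p fun a b => sw k q fun c d => f (𝑺 b * c) a d)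
      = sw k h fun p q => f 1 p q := by
  have i1 : ∀ a c d, Lin k fun b => f (𝑺 b * c) a d := fun a c d =>
    Lin.comp (f := fun x => f x a d) inferInstance inferInstance
  have i2 : ∀ a b d, Lin k fun c => f (𝑺 b * c) a d := fun a b d =>
    Lin.comp (f := fun x => f x a d) inferInstance inferInstance
  rw [sw_coassoc4 h fun a b c d => f (𝑺 b * c) a d]
  refine sw_congr _ fun a s => ?_
  have key : ∀ t d, (sw k t fun b c => f (𝑺 b * c) a d) = Coalgebra.counit (R := k) t • f 1 a d :=
    fun t d => sw_antipode_mul t fun x => f x a d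
  simp only [key]
  exact sw_counit_left s fun d => f 1 a d

/-- The antipode reverses the comultiplication. -/
theorem comul_antipode (h : H) :
    Coalgebra.comul (R := k) (𝑺 h) = sw k h fun a b => 𝑺 b ⊗ₜ[k] 𝑺 a := by
  let G : H →ₗ[k] H ⊗[k] H := TensorProduct.map 𝑺 𝑺 ∘ₗ
    (TensorProduct.comm k H H).toLinearMap ∘ₗ Coalgebra.comul
  have hG : ∀ h, G h = sw k h fun a b => 𝑺 b ⊗ₜ[k] 𝑺 a := fun h => by
    simp only [G, LinearMap.comp_apply, comul_eq_sw, map_sw]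
    simp
  have h1 : WithConv.toConv G * WithConv.toConv (Coalgebra.comul (R := k) (A := H)) = 1 := by
    ext h
    rw [LinearMap.convMul_apply, comul_eq_sw, map_sw, map_sw]
    simp only [TensorProduct.map_tmul, LinearMap.mul'_apply, hG, comul_eq_sw, sw_mul]
    simp only [mul_sw, Algebra.TensorProduct.tmul_mul_tmul]
    rw [sw_telescope h fun x a d => x ⊗ₜ[k] (𝑺 a * d),
      sw_antipode_mul h fun x => (1 : H) ⊗ₜ[k] x, LinearMap.convOne_apply,
      Algebra.algebraMap_eq_smul_one, Algebra.TensorProduct.one_def]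
  have e := left_inv_eq_right_inv h1 (LinearMap.comul_right_inv (R := k) (C := H))
  have key := congrArg (fun F : WithConv (H →ₗ[k] H ⊗[k] H) => F.ofConv h) e
  rw [← hG]
  exact key.symm

theorem sw_antipode (h : H) (f : H → H → M) [∀ b, Lin k fun a => f a b]
    [∀ a, Lin k fun b => f a b] : sw k (𝑺 h) f = sw k h fun a b => f (𝑺 b) (𝑺 a) := by
  obtain ⟨L, hL, hs⟩ := exists_sw_eq (k := k) f
  rw [hs, comul_antipode, map_sw]
  simp only [hL]

end HopfSweedler

/-! ### The `B`-components of `S_L` and `T` -/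

section Inverse

set_option synthInstance.maxHeartbeats 400000
set_option synthInstance.maxSize 2000

/-- The map `b ⊗ h ↦ (h₍₁₎▷b)σ(h₍₂₎,S(h₍₃₎))`, the `B`-component of `T`. -/
def vMap (act : H →ₗ[k] B →ₗ[k] B) (σ : H →ₗ[k] H →ₗ[k] B) : B →ₗ[k] H →ₗ[k] B :=
  let f : B → H → B := fun b h => sw k h fun q r => sw k q fun q1 q2 => act q1 b * σ q2 (𝑺 r)
  have h1 : ∀ h, Lin k fun b => f b h := fun _ => inferInstance
  have h2 : ∀ b, Lin k fun h => f b h := fun _ => inferInstance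
  LinearMap.mk₂ k f (fun a b c => (h1 c).1.map_add a b) (fun c a b => (h1 b).1.map_smul c a)
    (fun a b c => (h2 a).1.map_add b c) (fun c a b => (h2 a).1.map_smul c b)

theorem vMap_apply (act : H →ₗ[k] B →ₗ[k] B) (σ : H →ₗ[k] H →ₗ[k] B) (b : B) (h : H) :
    vMap act σ b h = sw k h fun q r => sw k q fun q1 q2 => act q1 b * σ q2 (𝑺 r) := rfl

/-- The map `b ⊗ h ↦ σ⁻¹(S(h₍₂₎),h₍₃₎)(S(h₍₁₎)▷b)`; evaluated at `S(h)` it is the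
`B`-component of `S_L`. -/
def wMap (act : H →ₗ[k] B →ₗ[k] B) (σi : H →ₗ[k] H →ₗ[k] B) : B →ₗ[k] H →ₗ[k] B :=
  let f : B → H → B := fun b h => sw k h fun p q => sw k p fun p1 p2 =>
    σi (𝑺 p2) q * act (𝑺 p1) b
  have h1 : ∀ h, Lin k fun b => f b h := fun _ => inferInstance
  have h2 : ∀ b, Lin k fun h => f b h := fun _ => inferInstance
  LinearMap.mk₂ k f (fun a b c => (h1 c).1.map_add a b) (fun c a b => (h1 b).1.map_smul c a)
    (fun a b c => (h2 a).1.map_add b c) (fun c a b => (h2 a).1.map_smul c b)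

theorem wMap_apply (act : H →ₗ[k] B →ₗ[k] B) (σi : H →ₗ[k] H →ₗ[k] B) (b : B) (h : H) :
    wMap act σi b h = sw k h fun p q => sw k p fun p1 p2 =>
      σi (𝑺 p2) q * act (𝑺 p1) b := rfl

variable {act : H →ₗ[k] B →ₗ[k] B} {σ σi : H →ₗ[k] H →ₗ[k] B}

/-- The `B`-component of `T ∘ S_L = id`. -/
theorem CocycleDatum.sw_vMap_wMap (hcd : CocycleDatum k H B act σ σi)
    (hassoc : ∀ (h g : H) (b : B), act h (act g b) = act (h * g) b) (b : B) (g : H) :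
    (sw k g fun g1 g2 => vMap act σ (wMap act σi b g2) g1)
      = Coalgebra.counit (R := k) g • b := by
  have e1 : ∀ g1 g2, vMap act σ (wMap act σi b g2) g1 = sw k g1 fun q r => sw k g2 fun p d =>
      sw k q fun q2 q3 => sw k p fun p1 p2 => sw k q2 fun e f =>
        act e (σi (𝑺 p2) d) * (act (f * 𝑺 p1) b * σ q3 (𝑺 r)) := fun g1 g2 => by
    rw [vMap_apply]
    simp only [wMap_apply, map_sw, hcd.act_mul_sw, hassoc, sw_mul, mul_assoc]
    refine sw_congr _ fun q r => ?_
    rw [sw_comm]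
  simp only [e1]
  rw [sw_coassoc4 g fun q r p d => sw k q fun q2 q3 => sw k p fun p1 p2 => sw k q2 fun e f =>
        act e (σi (𝑺 p2) d) * (act (f * 𝑺 p1) b * σ q3 (𝑺 r))]
  -- The cocycle identity for the legs `g₍₁₎, S(g₍₂₎), g₍₃₎`.
  have e2 : ∀ q t d, (sw k t fun r p => sw k q fun q2 q3 => sw k p fun p1 p2 => sw k q2 fun e f =>
        act e (σi (𝑺 p2) d) * (act (f * 𝑺 p1) b * σ q3 (𝑺 r)))
      = sw k q fun x1 x' => sw k t fun t1 t2 => sw k d fun z1 z' => σ x1 (𝑺 t2 * z1) *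
        sw k (x' * 𝑺 t1) fun m n => σi m z' * act n b := fun q t d => by
    have e3 := hcd.identity_two hassoc b q (𝑺 t) d
    have r1 : ∀ x1 x', (sw k (𝑺 t) fun y1 y' => act x1 (σi y1 d) *
          sw k x' fun x2 x3 => sw k y' fun y2 y3 => act (x2 * y2) b * σ x3 y3)
        = sw k t fun t1 t2 => sw k x' fun x2 x3 => sw k t1 fun r p1 =>
          act x1 (σi (𝑺 t2) d) * (act (x2 * 𝑺 p1) b * σ x3 (𝑺 r)) := fun x1 x' => by
      rw [sw_antipode t fun y1 y' => act x1 (σi y1 d) *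
          sw k x' fun x2 x3 => sw k y' fun y2 y3 => act (x2 * y2) b * σ x3 y3]
      refine sw_congr _ fun t1 t2 => ?_
      simp only [mul_sw]
      refine sw_congr _ fun x2 x3 => ?_
      exact sw_antipode t1 fun y2 y3 =>
        act x1 (σi (𝑺 t2) d) * (act (x2 * y2) b * σ x3 y3)
    have r2 : ∀ x1 x', (sw k (𝑺 t) fun y1 y' => sw k d fun z1 z' => σ x1 (y1 * z1) *
          sw k x' fun x2 x3 => sw k y' fun y2 y3 => σi (x2 * y2) z' * act (x3 * y3) b)
        = sw k t fun t1 t2 => sw k d fun z1 z' => σ x1 (𝑺 t2 * z1) *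
          sw k (x' * 𝑺 t1) fun m n => σi m z' * act n b := fun x1 x' => by
      rw [sw_antipode t fun y1 y' => sw k d fun z1 z' => σ x1 (y1 * z1) *
          sw k x' fun x2 x3 => sw k y' fun y2 y3 => σi (x2 * y2) z' * act (x3 * y3) b]
      refine sw_congr _ fun t1 t2 => sw_congr _ fun z1 z' => ?_
      rw [sw_arg_mul x' (𝑺 t1) fun m n => σi m z' * act n b]
    simp only [r1, r2] at e3
    rw [← e3, sw_comm]
    have r3 : ∀ q2 q3, (sw k t fun r p => sw k p fun p1 p2 => sw k q2 fun e f =>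
          act e (σi (𝑺 p2) d) * (act (f * 𝑺 p1) b * σ q3 (𝑺 r)))
        = sw k q2 fun e f => sw k t fun u p2 => sw k u fun r p1 =>
          act e (σi (𝑺 p2) d) * (act (f * 𝑺 p1) b * σ q3 (𝑺 r)) := fun q2 q3 => by
      rw [← sw_coassoc t fun r p1 p2 => sw k q2 fun e f =>
          act e (σi (𝑺 p2) d) * (act (f * 𝑺 p1) b * σ q3 (𝑺 r))]
      rw [sw_comm]
      refine sw_congr _ fun u p2 => ?_
      rw [sw_comm]
    simp only [r3]
    rw [sw_coassoc q fun e f q3 => sw k t fun u p2 => sw k u fun r p1 =>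
          act e (σi (𝑺 p2) d) * (act (f * 𝑺 p1) b * σ q3 (𝑺 r))]
    refine sw_congr _ fun e x' => ?_
    rw [sw_comm]
  simp only [e2]
  have e4 : ∀ q s, (sw k s fun t d => sw k q fun x1 x' => sw k t fun t1 t2 => sw k d fun z1 z' =>
        σ x1 (𝑺 t2 * z1) * sw k (x' * 𝑺 t1) fun m n => σi m z' * act n b)
      = sw k s fun t d => sw k (q * 𝑺 t) fun m n => σi m d * act n b := fun q s => by
    rw [sw_comm]
    have r1 : ∀ x1 x', (sw k s fun t d => sw k t fun t1 t2 => sw k d fun z1 z' =>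
        σ x1 (𝑺 t2 * z1) * sw k (x' * 𝑺 t1) fun m n => σi m z' * act n b)
        = Coalgebra.counit (R := k) x1 • sw k s fun t d =>
          sw k (x' * 𝑺 t) fun m n => σi m d * act n b := fun x1 x' => by
      rw [sw_telescope s fun y t1 z' => σ x1 y *
        sw k (x' * 𝑺 t1) fun m n => σi m z' * act n b]
      simp only [hcd.sigma_one, smul_mul_assoc, one_mul, ← smul_sw]
    simp only [r1]
    exact sw_counit_left q fun x' => sw k s fun t d =>
          sw k (x' * 𝑺 t) fun m n => σi m d * act n b
  simp only [e4]
  rw [← sw_coassoc g fun q t d => sw k (q * 𝑺 t) fun m n => σi m d * act n b]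
  have e5 : ∀ u d, (sw k u fun q t => sw k (q * 𝑺 t) fun m n => σi m d * act n b)
      = Coalgebra.counit (R := k) u • sw k (1 : H) fun m n => σi m d * act n b := fun u d =>
    sw_mul_antipode u fun x => sw k x fun m n => σi m d * act n b
  simp only [e5]
  rw [sw_counit_left g fun d => sw k (1 : H) fun m n => σi m d * act n b,
    sw_one (fun m n => σi m g * act n b), hcd.one_sigmai, hcd.one_act, smul_mul_assoc, one_mul]

/-- The `B`-component of `S_L ∘ T = id`. -/
theorem CocycleDatum.sw_wMap_vMap (hcd : CocycleDatum k H B act σ σi)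
    (hassoc : ∀ (h g : H) (b : B), act h (act g b) = act (h * g) b) (b : B) (h : H) :
    (sw k h fun a c => wMap act σi (vMap act σ b c) a)
      = Coalgebra.counit (R := k) h • b := by
  have e1 : ∀ a c, wMap act σi (vMap act σ b c) a = sw k a fun p q1 => sw k c fun q' r =>
      sw k p fun p1 p2 => σi (𝑺 p2) q1 * sw k (𝑺 p1) fun x2 x3 => sw k q' fun q2 q3 =>
        act (x2 * q2) b * act x3 (σ q3 (𝑺 r)) := fun a c => by
    rw [wMap_apply]
    simp only [vMap_apply, map_sw, hcd.act_mul_sw, hassoc]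
    refine sw_congr _ fun p q1 => ?_
    rw [sw_comm]
    refine sw_congr _ fun p1 p2 => ?_
    rw [mul_sw]
    refine sw_congr _ fun q' r => ?_
    rw [sw_comm]
  simp only [e1]
  rw [sw_coassoc4 h fun p q1 q' r =>
      sw k p fun p1 p2 => σi (𝑺 p2) q1 * sw k (𝑺 p1) fun x2 x3 => sw k q' fun q2 q3 =>
        act (x2 * q2) b * act x3 (σ q3 (𝑺 r))]
  -- The cocycle identity for the legs `S(h₍₁₎), h₍₂₎, S(h₍₃₎)`.
  have e2 : ∀ p t r, (sw k t fun q1 q' => sw k p fun p1 p2 => σi (𝑺 p2) q1 *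
        sw k (𝑺 p1) fun x2 x3 => sw k q' fun q2 q3 => act (x2 * q2) b * act x3 (σ q3 (𝑺 r)))
      = sw k p fun p1 p2 => sw k t fun y1 y' => act (𝑺 p2 * y1) b *
        sw k (𝑺 p1) fun x2 x3 => sw k y' fun y2 y3 => sw k (𝑺 r) fun z1 z2 =>
          σ (x2 * y2) z1 * σi x3 (y3 * z2) := fun p t r => by
    have e3 := hcd.identity_one hassoc b (𝑺 p) t (𝑺 r)
    rw [sw_antipode p fun x1 x' => sw k t fun y1 y' => σi x1 y1 *
        sw k x' fun x2 x3 => sw k y' fun y2 y3 => act (x2 * y2) b * act x3 (σ y3 (𝑺 r)),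
      sw_antipode p fun x1 x' => sw k t fun y1 y' => act (x1 * y1) b *
        sw k x' fun x2 x3 => sw k y' fun y2 y3 => sw k (𝑺 r) fun z1 z2 =>
          σ (x2 * y2) z1 * σi x3 (y3 * z2)] at e3
    rw [← e3, sw_comm]
  simp only [e2]
  rw [← sw_coassoc h fun p t r => sw k p fun p1 p2 => sw k t fun y1 y' => act (𝑺 p2 * y1) b *
        sw k (𝑺 p1) fun x2 x3 => sw k y' fun y2 y3 => sw k (𝑺 r) fun z1 z2 =>
          σ (x2 * y2) z1 * σi x3 (y3 * z2)]
  have e4 : ∀ u r, (sw k u fun p t => sw k p fun p1 p2 => sw k t fun y1 y' => act (𝑺 p2 * y1) b *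
        sw k (𝑺 p1) fun x2 x3 => sw k y' fun y2 y3 => sw k (𝑺 r) fun z1 z2 =>
          σ (x2 * y2) z1 * σi x3 (y3 * z2))
      = sw k u fun p q => b * σi (𝑺 p) (q * 𝑺 r) := fun u r => by
    rw [sw_telescope u fun y p1 y' => act y b *
        sw k (𝑺 p1) fun x2 x3 => sw k y' fun y2 y3 => sw k (𝑺 r) fun z1 z2 =>
          σ (x2 * y2) z1 * σi x3 (y3 * z2), hcd.one_act]
    have r1 : ∀ p y', (sw k (𝑺 p) fun x2 x3 => sw k y' fun y2 y3 => sw k (𝑺 r) fun z1 z2 =>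
          σ (x2 * y2) z1 * σi x3 (y3 * z2))
        = sw k p fun p1 p2 => sw k y' fun y2 y3 => sw k (𝑺 r) fun z1 z2 =>
          σ (𝑺 p2 * y2) z1 * σi (𝑺 p1) (y3 * z2) := fun p y' =>
      sw_antipode p fun x2 x3 => sw k y' fun y2 y3 => sw k (𝑺 r) fun z1 z2 =>
          σ (x2 * y2) z1 * σi x3 (y3 * z2)
    simp only [r1, ← mul_sw]
    rw [sw_telescope u fun y p1 y3 => sw k (𝑺 r) fun z1 z2 =>
          σ y z1 * σi (𝑺 p1) (y3 * z2)]
    congr 1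
    refine sw_congr _ fun p q => ?_
    simp only [hcd.one_sigma, smul_mul_assoc, one_mul]
    exact sw_counit_left (𝑺 r) fun z2 => σi (𝑺 p) (q * z2)
  simp only [e4]
  rw [sw_coassoc h fun p q r => b * σi (𝑺 p) (q * 𝑺 r)]
  have e5 : ∀ p s, (sw k s fun q r => b * σi (𝑺 p) (q * 𝑺 r))
      = Coalgebra.counit (R := k) s • (b * σi (𝑺 p) 1) := fun p s =>
    sw_mul_antipode s fun x => b * σi (𝑺 p) x
  simp only [e5]
  rw [sw_counit_right h fun p => b * σi (𝑺 p) 1, hcd.sigmai_one, HopfAlgebra.counit_antipode,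
    mul_smul_comm, mul_one]

end Inverse

/-! ### Products by `s(c)` and `t(c)`, and the maps `S_L` and `T` -/

section Components

theorem eq_of_pure {M : Type*} [AddCommMonoid M] [Module k M] {F G : B ⊗[k] (B ⊗[k] H) →ₗ[k] M}
    (e : ∀ b b' h, F (b ⊗ₜ (b' ⊗ₜ h)) = G (b ⊗ₜ (b' ⊗ₜ h))) (X : B ⊗[k] (B ⊗[k] H)) :
    F X = G X := by
  congr 1
  refine TensorProduct.ext' fun b y => ?_
  induction y using TensorProduct.induction_on with
  | zero => simp
  | tmul b' h => exact e b b' h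
  | add x y hx hy => rw [TensorProduct.tmul_add, map_add, map_add, hx, hy]

variable {M : Type*} [AddCommMonoid M] [Module k M]

local notation "ε" => Coalgebra.counit (R := k)

theorem sum_counit13 {n : ℕ} {h : H} {h1 h2 h3 h4 : Fin n → H} (hh : IsRep4 k H h h1 h2 h3 h4)
    (f : H → H → M) [∀ b, Lin k fun a => f a b] [∀ a, Lin k fun b => f a b] :
    ∑ i, ε (h1 i) • ε (h3 i) • f (h2 i) (h4 i) = sw k h f := by
  rw [sum_rep4 (k := k) hh fun a b c d => ε a • ε c • f b d]
  refine sw_congr _ fun u d => ?_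
  have key : ∀ t c : H, (sw k t fun a b => ε a • ε c • f b d) = ε c • f t d := fun t c =>
    sw_counit_left t fun b => ε c • f b d
  simp only [key]
  exact sw_counit_right u fun t => f t d

theorem sum_counit24 {n : ℕ} {h : H} {h1 h2 h3 h4 : Fin n → H} (hh : IsRep4 k H h h1 h2 h3 h4)
    (f : H → H → M) [∀ b, Lin k fun a => f a b] [∀ a, Lin k fun b => f a b] :
    ∑ i, ε (h2 i) • ε (h4 i) • f (h1 i) (h3 i) = sw k h f := by
  rw [sum_rep4 (k := k) hh fun a b c d => ε b • ε d • f a c]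
  have key : ∀ t c d : H, (sw k t fun a b => ε b • ε d • f a c) = ε d • f t c := fun t c d =>
    sw_counit_right t fun a => ε d • f a c
  simp only [key, ← smul_sw]
  exact sw_counit_right h fun u => sw k u f

theorem isRep4_one : IsRep4 k H 1 (fun _ : Fin 1 => 1) (fun _ => 1) (fun _ => 1) fun _ => 1 := by
  simp [IsRep4, Δ4, Δ3, Algebra.TensorProduct.one_def]

variable {act : H →ₗ[k] B →ₗ[k] B} {σ σi : H →ₗ[k] H →ₗ[k] B}
  {mult : B ⊗[k] (B ⊗[k] H) →ₗ[k] B ⊗[k] (B ⊗[k] H) →ₗ[k] B ⊗[k] (B ⊗[k] H)}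

/-- `t(c)(b⊗b'⊗h) = b ⊗ b'(S(h₍₂₎)▷c) ⊗ h₍₁₎`. -/
theorem CocycleDatum.target_mul (hcd : CocycleDatum k H B act σ σi)
    (hmult : IsAlgebroidMul k H B act σ mult) (c b b' : B) (h : H) :
    mult ((1 : B) ⊗ₜ (c ⊗ₜ (1 : H))) (b ⊗ₜ (b' ⊗ₜ h))
      = sw k h fun u d => b ⊗ₜ[k] ((b' * act (𝑺 d) c) ⊗ₜ[k] u) := by
  obtain ⟨n, h1, h2, h3, h4, hh⟩ := exists_rep4 (Δ4 k H h)
  rw [hmult 1 c b b' 1 h _ _ _ _ h1 h2 h3 h4 isRep4_one hh, Fin.sum_univ_one,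
    ← sum_counit13 hh fun u d => b ⊗ₜ[k] ((b' * act (𝑺 d) c) ⊗ₜ[k] u)]
  refine Finset.sum_congr rfl fun i _ => ?_
  simp only [hcd.one_act, hcd.one_sigma, hcd.sigma_one, one_mul, mul_one,
    HopfAlgebra.antipode_one, HopfAlgebra.counit_antipode, mul_smul_comm,
    ← TensorProduct.smul_tmul', TensorProduct.tmul_smul, smul_smul, mul_comm]

/-- `s(c)(b⊗b'⊗h) = cb ⊗ b' ⊗ h`. -/
theorem CocycleDatum.source_mul (hcd : CocycleDatum k H B act σ σi)
    (hmult : IsAlgebroidMul k H B act σ mult) (c b b' : B) (h : H) :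
    mult (c ⊗ₜ ((1 : B) ⊗ₜ (1 : H))) (b ⊗ₜ (b' ⊗ₜ h)) = (c * b) ⊗ₜ[k] (b' ⊗ₜ[k] h) := by
  obtain ⟨n, h1, h2, h3, h4, hh⟩ := exists_rep4 (Δ4 k H h)
  rw [hmult c 1 b b' 1 h _ _ _ _ h1 h2 h3 h4 isRep4_one hh, Fin.sum_univ_one,
    ← sw_counit_right (k := k) h fun x => (c * b) ⊗ₜ[k] (b' ⊗ₜ[k] x),
    ← sum_counit13 hh fun x d => ε d • (c * b) ⊗ₜ[k] (b' ⊗ₜ[k] x)]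
  refine Finset.sum_congr rfl fun i _ => ?_
  simp only [hcd.one_act, hcd.one_sigma, hcd.sigma_one, hcd.toMeasuring.act_one, one_mul, mul_one,
    HopfAlgebra.antipode_one, HopfAlgebra.counit_antipode, mul_smul_comm,
    ← TensorProduct.smul_tmul', TensorProduct.tmul_smul, smul_smul, mul_comm]

/-- `(b⊗b'⊗h)s(c) = b(h₍₁₎▷c) ⊗ b' ⊗ h₍₂₎`. -/
theorem CocycleDatum.mul_source (hcd : CocycleDatum k H B act σ σi)
    (hmult : IsAlgebroidMul k H B act σ mult) (c b b' : B) (h : H) :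
    mult (b ⊗ₜ (b' ⊗ₜ h)) (c ⊗ₜ ((1 : B) ⊗ₜ (1 : H)))
      = sw k h fun g1 g2 => (b * act g1 c) ⊗ₜ[k] (b' ⊗ₜ[k] g2) := by
  obtain ⟨n, h1, h2, h3, h4, hh⟩ := exists_rep4 (Δ4 k H h)
  rw [hmult b b' c 1 h 1 h1 h2 h3 h4 _ _ _ _ hh isRep4_one,
    ← sum_counit24 hh fun x y => (b * act x c) ⊗ₜ[k] (b' ⊗ₜ[k] y)]
  refine Finset.sum_congr rfl fun i _ => ?_
  rw [Fin.sum_univ_one]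
  simp only [hcd.one_act, hcd.one_sigma, hcd.sigma_one, one_mul, mul_one,
    HopfAlgebra.antipode_one, HopfAlgebra.counit_antipode, mul_smul_comm,
    ← TensorProduct.smul_tmul', TensorProduct.tmul_smul, smul_smul, mul_comm]

/-- `(b⊗b'⊗h)t(c) = b ⊗ cb' ⊗ h`. -/
theorem CocycleDatum.mul_target (hcd : CocycleDatum k H B act σ σi)
    (hmult : IsAlgebroidMul k H B act σ mult) (c b b' : B) (h : H) :
    mult (b ⊗ₜ (b' ⊗ₜ h)) ((1 : B) ⊗ₜ (c ⊗ₜ (1 : H))) = b ⊗ₜ[k] ((c * b') ⊗ₜ[k] h) := by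
  obtain ⟨n, h1, h2, h3, h4, hh⟩ := exists_rep4 (Δ4 k H h)
  rw [hmult b b' 1 c h 1 h1 h2 h3 h4 _ _ _ _ hh isRep4_one,
    ← sw_counit_left (k := k) h fun x => b ⊗ₜ[k] ((c * b') ⊗ₜ[k] x),
    ← sum_counit24 hh fun x y => ε x • b ⊗ₜ[k] ((c * b') ⊗ₜ[k] y)]
  refine Finset.sum_congr rfl fun i _ => ?_
  rw [Fin.sum_univ_one]
  simp only [hcd.one_act, hcd.one_sigma, hcd.sigma_one, hcd.toMeasuring.act_one, mul_one,
    HopfAlgebra.antipode_one, HopfAlgebra.counit_antipode, mul_smul_comm,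
    ← TensorProduct.smul_tmul', TensorProduct.tmul_smul, smul_smul, mul_comm, mul_left_comm]

/-- `S_L` through its `B`-component `wMap`. -/
theorem antipode_formula {n : ℕ} (b b' : B) (h : H) {h1 h2 h3 h4 : Fin n → H}
    (hh : IsRep4 k H h h1 h2 h3 h4) :
    ∑ i, b' ⊗ₜ[k] ((σi (𝑺 (𝑺 (h2 i))) (𝑺 (h1 i)) * act (𝑺 (𝑺 (h3 i))) b) ⊗ₜ[k] 𝑺 (h4 i))
      = sw k h fun a c => b' ⊗ₜ[k] (wMap act σi b (𝑺 a) ⊗ₜ[k] 𝑺 c) := by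
  rw [sum_rep4 (k := k) hh fun x y z w =>
    b' ⊗ₜ[k] ((σi (𝑺 (𝑺 y)) (𝑺 x) * act (𝑺 (𝑺 z)) b) ⊗ₜ[k] 𝑺 w)]
  refine sw_congr _ fun u d => ?_
  have e1 : ∀ y q, (sw k (𝑺 y) fun p1 p2 => σi (𝑺 p2) q * act (𝑺 p1) b)
      = sw k y fun m n => σi (𝑺 (𝑺 m)) q * act (𝑺 (𝑺 n)) b := fun y q =>
    sw_antipode y fun p1 p2 => σi (𝑺 p2) q * act (𝑺 p1) b
  rw [wMap_apply, sw_antipode u fun p q => sw k p fun p1 p2 => σi (𝑺 p2) q * act (𝑺 p1) b]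
  simp only [e1, sw_tmul, tmul_sw]
  exact sw_coassoc u fun x y z =>
    b' ⊗ₜ[k] ((σi (𝑺 (𝑺 y)) (𝑺 x) * act (𝑺 (𝑺 z)) b) ⊗ₜ[k] 𝑺 d)

/-- `T` through its `B`-component `vMap`. -/
theorem inverse_formula {n : ℕ} (Sinv : H →ₗ[k] H) (b b' : B) (h : H) {h1 h2 h3 h4 : Fin n → H}
    (hh : IsRep4 k H h h1 h2 h3 h4) :
    ∑ i, (act (h2 i) b' * σ (h3 i) (𝑺 (h4 i))) ⊗ₜ[k] (b ⊗ₜ[k] Sinv (h1 i))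
      = sw k h fun a q => vMap act σ b' q ⊗ₜ[k] (b ⊗ₜ[k] Sinv a) := by
  rw [sum_rep4 (k := k) hh fun x y z w =>
    (act y b' * σ z (𝑺 w)) ⊗ₜ[k] (b ⊗ₜ[k] Sinv x)]
  have e1 : ∀ u d, (sw k u fun t c => sw k t fun x y =>
        (act y b' * σ c (𝑺 d)) ⊗ₜ[k] (b ⊗ₜ[k] Sinv x))
      = sw k u fun x s => sw k s fun y c => (act y b' * σ c (𝑺 d)) ⊗ₜ[k] (b ⊗ₜ[k] Sinv x) :=
    fun u d => sw_coassoc u fun x y c => (act y b' * σ c (𝑺 d)) ⊗ₜ[k] (b ⊗ₜ[k] Sinv x)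
  simp only [e1, vMap_apply, sw_tmul]
  exact sw_coassoc h fun x s d => sw k s fun y c =>
    (act y b' * σ c (𝑺 d)) ⊗ₜ[k] (b ⊗ₜ[k] Sinv x)

end Components

/-- Proposition 3.6: in the associative-type case (with bijective antipode) the maps
`S_L(b⊗b'⊗h) = b' ⊗ σ⁻¹(S²(h₍₂₎),S(h₍₁₎))(S²(h₍₃₎)▷b) ⊗ S(h₍₄₎)` and
`T(b⊗b'⊗h) = (h₍₂₎▷b')σ(h₍₃₎,S(h₍₄₎)) ⊗ b ⊗ S⁻¹(h₍₁₎)` are mutually inverse and satisfy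
the antipode compatibilities with the source and target maps. -/
theorem statement13 (act : H →ₗ[k] B →ₗ[k] B) (σ σi : H →ₗ[k] H →ₗ[k] B)
    (hcd : CocycleDatum k H B act σ σi)
    (hassoc : ∀ (h g : H) (b : B), act h (act g b) = act (h * g) b)
    (Sinv : H →ₗ[k] H)
    (hSinv : ∀ h : H, Sinv (𝑺 h) = h ∧ 𝑺 (Sinv h) = h)
    (mult : B ⊗[k] (B ⊗[k] H) →ₗ[k] B ⊗[k] (B ⊗[k] H) →ₗ[k] B ⊗[k] (B ⊗[k] H))
    (hmult : IsAlgebroidMul k H B act σ mult)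
    (SL Tm : B ⊗[k] (B ⊗[k] H) →ₗ[k] B ⊗[k] (B ⊗[k] H))
    (hSL : ∀ (b b' : B) (h : H) {n : ℕ} (h1 h2 h3 h4 : Fin n → H),
      IsRep4 k H h h1 h2 h3 h4 →
      SL (b ⊗ₜ[k] (b' ⊗ₜ[k] h))
        = ∑ i, b' ⊗ₜ[k]
            ((σi (𝑺 (𝑺 (h2 i))) (𝑺 (h1 i)) * act (𝑺 (𝑺 (h3 i))) b) ⊗ₜ[k] 𝑺 (h4 i)))
    (hTm : ∀ (b b' : B) (h : H) {n : ℕ} (h1 h2 h3 h4 : Fin n → H),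
      IsRep4 k H h h1 h2 h3 h4 →
      Tm (b ⊗ₜ[k] (b' ⊗ₜ[k] h))
        = ∑ i, (act (h2 i) b' * σ (h3 i) (𝑺 (h4 i))) ⊗ₜ[k] (b ⊗ₜ[k] Sinv (h1 i))) :
    -- S_L and T are mutually inverse
    (∀ X : B ⊗[k] (B ⊗[k] H), Tm (SL X) = X ∧ SL (Tm X) = X)
    ∧
    -- S_L(t(c)X) = S_L(X)s(c)
    (∀ (c : B) (X : B ⊗[k] (B ⊗[k] H)),
      SL (mult ((1 : B) ⊗ₜ[k] (c ⊗ₜ[k] (1 : H))) X)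
        = mult (SL X) (c ⊗ₜ[k] ((1 : B) ⊗ₜ[k] (1 : H))))
    ∧
    -- T(s(c)X) = T(X)t(c)
    (∀ (c : B) (X : B ⊗[k] (B ⊗[k] H)),
      Tm (mult (c ⊗ₜ[k] ((1 : B) ⊗ₜ[k] (1 : H))) X)
        = mult (Tm X) ((1 : B) ⊗ₜ[k] (c ⊗ₜ[k] (1 : H)))) := by
  -- Reduction to pure tensors and to the bilinear `B`-components of `S_L` and `T`.
  have eSL : ∀ b b' h, SL (b ⊗ₜ[k] (b' ⊗ₜ[k] h))
      = sw k h fun a c => b' ⊗ₜ[k] (wMap act σi b (𝑺 a) ⊗ₜ[k] 𝑺 c) := fun b b' h => by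
    obtain ⟨n, h1, h2, h3, h4, hh⟩ := exists_rep4 (Δ4 k H h)
    rw [hSL b b' h h1 h2 h3 h4 hh, antipode_formula b b' h hh]
  have eTm : ∀ b b' h, Tm (b ⊗ₜ[k] (b' ⊗ₜ[k] h))
      = sw k h fun a q => vMap act σ b' q ⊗ₜ[k] (b ⊗ₜ[k] Sinv a) := fun b b' h => by
    obtain ⟨n, h1, h2, h3, h4, hh⟩ := exists_rep4 (Δ4 k H h)
    rw [hTm b b' h h1 h2 h3 h4 hh, inverse_formula Sinv b b' h hh]
  refine ⟨fun X => ⟨?_, ?_⟩, fun c X => ?_, fun c X => ?_⟩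
  · refine eq_of_pure (F := Tm ∘ₗ SL) (G := LinearMap.id) (fun b b' h => ?_) X
    rw [LinearMap.comp_apply, eSL, map_sw, LinearMap.id_apply]
    have e1 : ∀ a c : H, Tm (b' ⊗ₜ[k] (wMap act σi b (𝑺 a) ⊗ₜ[k] 𝑺 c)) = sw k c fun e f =>
        vMap act σ (wMap act σi b (𝑺 a)) (𝑺 e) ⊗ₜ[k] (b' ⊗ₜ[k] f) := fun a c => by
      rw [eTm, sw_antipode c fun x q =>
        vMap act σ (wMap act σi b (𝑺 a)) q ⊗ₜ[k] (b' ⊗ₜ[k] Sinv x)]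
      simp only [(hSinv _).1]
    simp only [e1]
    rw [← sw_coassoc h fun a e f =>
      vMap act σ (wMap act σi b (𝑺 a)) (𝑺 e) ⊗ₜ[k] (b' ⊗ₜ[k] f)]
    have e2 : ∀ t : H, (sw k t fun a e => vMap act σ (wMap act σi b (𝑺 a)) (𝑺 e))
        = Coalgebra.counit (R := k) t • b := fun t => by
      rw [← sw_antipode t fun g1 g2 => vMap act σ (wMap act σi b g2) g1,
        hcd.sw_vMap_wMap hassoc, HopfAlgebra.counit_antipode]
    simp only [← sw_tmul, e2, ← TensorProduct.smul_tmul']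
    exact sw_counit_left h fun f => b ⊗ₜ[k] (b' ⊗ₜ[k] f)
  · refine eq_of_pure (F := SL ∘ₗ Tm) (G := LinearMap.id) (fun b b' h => ?_) X
    rw [LinearMap.comp_apply, eTm, map_sw, LinearMap.id_apply]
    have e1 : ∀ a q : H, SL (vMap act σ b' q ⊗ₜ[k] (b ⊗ₜ[k] Sinv a)) = sw k a fun a1 a2 =>
        b ⊗ₜ[k] (wMap act σi (vMap act σ b' q) a2 ⊗ₜ[k] a1) := fun a q => by
      have r := sw_antipode (k := k) (Sinv a) fun a1 a2 =>
        b ⊗ₜ[k] (wMap act σi (vMap act σ b' q) a2 ⊗ₜ[k] a1)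
      rw [(hSinv a).2] at r
      rw [eSL, r]
    simp only [e1]
    rw [sw_coassoc h fun a1 a2 q => b ⊗ₜ[k] (wMap act σi (vMap act σ b' q) a2 ⊗ₜ[k] a1)]
    simp only [← sw_tmul, ← tmul_sw, hcd.sw_wMap_vMap hassoc]
    simp only [← TensorProduct.smul_tmul']
    exact congrArg _ (sw_counit_right h fun a1 => b' ⊗ₜ[k] a1)
  · refine eq_of_pure (F := SL ∘ₗ mult ((1 : B) ⊗ₜ[k] (c ⊗ₜ[k] (1 : H))))
      (G := mult.flip (c ⊗ₜ[k] ((1 : B) ⊗ₜ[k] (1 : H))) ∘ₗ SL) (fun b b' h => ?_) X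
    simp only [LinearMap.comp_apply, LinearMap.flip_apply]
    rw [hcd.target_mul hmult, eSL, map_sw, map_sw_fst]
    simp only [eSL, hcd.mul_source hmult]
    have e1 : ∀ a q : H, (sw k (𝑺 q) fun g1 g2 =>
          (b' * act g1 c) ⊗ₜ[k] (wMap act σi b (𝑺 a) ⊗ₜ[k] g2))
        = sw k q fun e d => (b' * act (𝑺 d) c) ⊗ₜ[k] (wMap act σi b (𝑺 a) ⊗ₜ[k] 𝑺 e) :=
      fun a q => sw_antipode q fun g1 g2 =>
        (b' * act g1 c) ⊗ₜ[k] (wMap act σi b (𝑺 a) ⊗ₜ[k] g2)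
    simp only [e1]
    exact sw_coassoc h fun a e d =>
      (b' * act (𝑺 d) c) ⊗ₜ[k] (wMap act σi b (𝑺 a) ⊗ₜ[k] 𝑺 e)
  · refine eq_of_pure (F := Tm ∘ₗ mult (c ⊗ₜ[k] ((1 : B) ⊗ₜ[k] (1 : H))))
      (G := mult.flip ((1 : B) ⊗ₜ[k] (c ⊗ₜ[k] (1 : H))) ∘ₗ Tm) (fun b b' h => ?_) X
    simp only [LinearMap.comp_apply, LinearMap.flip_apply]
    rw [hcd.source_mul hmult, eTm, eTm, map_sw_fst]
    simp only [hcd.mul_target hmult]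

end Statements
end
end

section
/- Let (▷,σ) be a cocycle datum of associative type for a Hopf algebra H on an algebra B. Then: (i) for all h,g,f ∈ H and d ∈ B, (h_{(1)}▷((g_{(1)}▷d)σ(g_{(2)},f_{(1)})))·σ(h_{(2)}, g_{(3)}f_{(2)}) = σ(h_{(1)},g_{(1)})·((h_{(2)}g_{(2)})▷d)·σ(h_{(3)}g_{(3)}, f); (ii) for all b,b',c,c' ∈ B and h,g ∈ H, b(h_{(1)}▷c)σ⁻¹(h_{(2)},g_{(1)})σ(h_{(3)},g_{(2)})((h_{(4)}g_{(3)})▷c')(h_{(5)}▷b') = b(h_{(1)}▷c)((h_{(2)}g)▷c')(h_{(3)}▷b'), and the same identity with σ and σ⁻¹ interchanged. -/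
/-!
Everything takes place in convolution algebras of linear maps into `B`, where Sweedler
coassociativity and the counit axioms become associativity and unitality of a ring.

In `Hom(H ⊗ H, B)` write `Σ`, `Σ⁻¹` for `σ`, `σ⁻¹` and `A d` for `x ⊗ y ↦ (xy) ▷ d`. Since `▷` is an
action, the twisted module axiom of a cocycle datum reads `A d = Σ * A d * Σ⁻¹`, so `A d` commutes
with `Σ` (`CocycleDatum.actMul_comm_sigma`).

For (i), measuring and associativity turn the left-hand side into
`A d * ∑ₗ (x ⊗ y ↦ x ▷ σ(y, f₍₁₎)) * (x ⊗ y ↦ σ(x, y f₍₂₎))`. By the cocycle identity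
(`CocycleDatum.sum_conv_eq`) this is `A d * Σ * R` with `R (x ⊗ y) = σ(xy, f)`, and moving `Σ` to the
front gives the right-hand side.

For (ii), both sides are values at `h` of convolution products in `Hom(H, B)`; the three middle
factors of the left-hand side, summed over the legs of `g`, form
`(Σ⁻¹ * Σ * A c')(· ⊗ g) = A c' (· ⊗ g)`, and likewise with `Σ` and `Σ⁻¹` interchanged.
-/

open scoped TensorProduct
open Coalgebra

noncomputable section

section ConvolutionHelpers

open WithConv

variable {k : Type*} [Field k]
variable {H : Type*} [Ring H] [Bialgebra k H]
variable {B : Type*} [Ring B] [Algebra k B]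

/-! ### Sweedler representatives and convolution products -/

lemma exists_isRep2 (h : H) : ∃ (n : ℕ) (h1 h2 : Fin n → H), IsRep2 k H h h1 h2 :=
  TensorProduct.exists_sum_tmul_eq (Coalgebra.comul (R := k) h)

lemma exists_isRep3 (h : H) : ∃ (n : ℕ) (h1 h2 h3 : Fin n → H), IsRep3 k H h h1 h2 h3 := by
  obtain ⟨n, a, b, hab⟩ := exists_isRep2 (k := k) h
  choose N p q hpq using fun i => exists_isRep2 (k := k) (a i)
  -- Split the first leg of each summand and reindex the resulting double sum by a single `Fin`.
  let e := finSigmaFinEquiv (n := N)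
  refine ⟨∑ i, N i, fun s => p (e.symm s).1 (e.symm s).2, fun s => q (e.symm s).1 (e.symm s).2,
    fun s => b (e.symm s).1, ?_⟩
  rw [IsRep3, e.symm.sum_comp (fun x : (i : Fin n) × Fin (N i) =>
    (p x.1 x.2 ⊗ₜ[k] q x.1 x.2) ⊗ₜ[k] b x.1), Fintype.sum_sigma, Δ3, LinearMap.comp_apply, hab,
    map_sum]
  refine Finset.sum_congr rfl fun i _ => ?_
  rw [LinearMap.rTensor_tmul, hpq i, TensorProduct.sum_tmul]

/-- Right multiplication by `K` in the convolution algebra, for a map that factors as `L ∘ D`.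
With `D` an iterated coproduct, this factors an iterated convolution product through the next
left-nested iterated coproduct. -/
lemma conv_factor {M : Type*} [AddCommMonoid M] [Module k M] {F K : WithConv (H →ₗ[k] B)}
    {L : M →ₗ[k] B} {D : H →ₗ[k] M} (hF : F.ofConv = L ∘ₗ D) :
    (F * K).ofConv = (LinearMap.mul' k B ∘ₗ TensorProduct.map L K.ofConv) ∘ₗ
      (LinearMap.rTensor H D ∘ₗ Coalgebra.comul) := by
  rw [LinearMap.convMul_def, hF, ← LinearMap.map_comp_rTensor]
  rfl

lemma conv2_apply (F G : WithConv (H →ₗ[k] B)) {h : H} {n : ℕ} {h1 h2 : Fin n → H}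
    (hr : IsRep2 k H h h1 h2) : (F * G) h = ∑ i, F (h1 i) * G (h2 i) := by
  rw [LinearMap.convMul_apply, hr]
  simp

/-- Threefold convolution products factor through `Δ3`. -/
lemma conv3_eq (F G K : WithConv (H →ₗ[k] B)) :
    (F * G * K).ofConv = (LinearMap.mul' k B ∘ₗ TensorProduct.map
      (LinearMap.mul' k B ∘ₗ TensorProduct.map F.ofConv G.ofConv) K.ofConv) ∘ₗ Δ3 k H :=
  conv_factor rfl

lemma conv3_apply (F G K : WithConv (H →ₗ[k] B)) {h : H} {n : ℕ} {h1 h2 h3 : Fin n → H}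
    (hr : IsRep3 k H h h1 h2 h3) :
    (F * G * K) h = ∑ i, F (h1 i) * G (h2 i) * K (h3 i) := by
  refine (LinearMap.congr_fun (conv3_eq F G K) h).trans ?_
  rw [LinearMap.comp_apply, hr]
  simp

lemma conv5_apply (F₁ F₂ F₃ F₄ F₅ : WithConv (H →ₗ[k] B)) {h : H} {n : ℕ}
    {h1 h2 h3 h4 h5 : Fin n → H} (hr : IsRep5 k H h h1 h2 h3 h4 h5) :
    (F₁ * F₂ * F₃ * F₄ * F₅) h
      = ∑ i, F₁ (h1 i) * F₂ (h2 i) * F₃ (h3 i) * F₄ (h4 i) * F₅ (h5 i) := by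
  have e4 := conv_factor (K := F₄) (conv3_eq F₁ F₂ F₃)
  rw [← Δ4] at e4
  have e5 := conv_factor (K := F₅) e4
  rw [← Δ5] at e5
  rw [e5, LinearMap.comp_apply, hr]
  simp

/-- The convolution element of `Hom(H ⊗ H, B)` given by a bilinear map. -/
def bil (F : H →ₗ[k] H →ₗ[k] B) : WithConv (H ⊗[k] H →ₗ[k] B) := toConv (TensorProduct.lift F)

@[simp] lemma bil_tmul (F : H →ₗ[k] H →ₗ[k] B) (x y : H) : bil F (x ⊗ₜ[k] y) = F x y := rfl

lemma conv_tensor_ext {F G : WithConv (H ⊗[k] H →ₗ[k] B)}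
    (hFG : ∀ x y : H, F (x ⊗ₜ[k] y) = G (x ⊗ₜ[k] y)) : F = G :=
  WithConv.ofConv_injective (TensorProduct.ext' hFG)

lemma comul_tensor {h g : H} {n m : ℕ} {h1 h2 : Fin n → H} {g1 g2 : Fin m → H}
    (hh : IsRep2 k H h h1 h2) (hg : IsRep2 k H g g1 g2) :
    Coalgebra.comul (R := k) (h ⊗ₜ[k] g)
      = ∑ i, ∑ j, (h1 i ⊗ₜ[k] g1 j) ⊗ₜ[k] (h2 i ⊗ₜ[k] g2 j) := by
  rw [TensorProduct.comul_tmul, hh, hg, TensorProduct.sum_tmul, map_sum]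
  refine Finset.sum_congr rfl fun i _ => ?_
  rw [TensorProduct.tmul_sum, map_sum]
  rfl

/-- `Δ3` of the tensor product coalgebra is the shuffle of the two copies of `Δ3`. -/
lemma Δ3_tensor (h g : H) :
    Δ3 k (H ⊗[k] H) (h ⊗ₜ[k] g)
      = LinearMap.rTensor (H ⊗[k] H)
          (TensorProduct.tensorTensorTensorComm k H H H H).toLinearMap
          (TensorProduct.tensorTensorTensorComm k (H ⊗[k] H) H (H ⊗[k] H) H
            (Δ3 k H h ⊗ₜ[k] Δ3 k H g)) := by
  have key : ∀ x y : H ⊗[k] H,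
      LinearMap.rTensor (H ⊗[k] H) (Coalgebra.comul (R := k) (A := H ⊗[k] H))
        (TensorProduct.tensorTensorTensorComm k H H H H (x ⊗ₜ[k] y))
      = LinearMap.rTensor (H ⊗[k] H)
          (TensorProduct.tensorTensorTensorComm k H H H H).toLinearMap
          (TensorProduct.tensorTensorTensorComm k (H ⊗[k] H) H (H ⊗[k] H) H
            (LinearMap.rTensor H Coalgebra.comul x ⊗ₜ[k]
              LinearMap.rTensor H Coalgebra.comul y)) := by
    intro x y
    induction x with
    | zero => simp
    | add x₁ x₂ h₁ h₂ => simp only [TensorProduct.add_tmul, map_add, h₁, h₂]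
    | tmul a b =>
      induction y with
      | zero => simp
      | add y₁ y₂ h₁ h₂ => simp only [TensorProduct.tmul_add, map_add, h₁, h₂]
      | tmul c d => rfl
  exact key _ _

lemma isRep3_tensor {h g : H} {n m : ℕ} {h1 h2 h3 : Fin n → H} {g1 g2 g3 : Fin m → H}
    (hh : IsRep3 k H h h1 h2 h3) (hg : IsRep3 k H g g1 g2 g3) :
    Δ3 k (H ⊗[k] H) (h ⊗ₜ[k] g)
      = ∑ i, ∑ j, ((h1 i ⊗ₜ[k] g1 j) ⊗ₜ[k] (h2 i ⊗ₜ[k] g2 j)) ⊗ₜ[k] (h3 i ⊗ₜ[k] g3 j) := by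
  rw [Δ3_tensor, hh, hg]
  simp [TensorProduct.sum_tmul, TensorProduct.tmul_sum, Finset.sum_comm (γ := Fin m)]

lemma conv2_tensor_apply (F G : WithConv (H ⊗[k] H →ₗ[k] B)) {h g : H} {n m : ℕ}
    {h1 h2 : Fin n → H} {g1 g2 : Fin m → H}
    (hh : IsRep2 k H h h1 h2) (hg : IsRep2 k H g g1 g2) :
    (F * G) (h ⊗ₜ[k] g) = ∑ i, ∑ j, F (h1 i ⊗ₜ[k] g1 j) * G (h2 i ⊗ₜ[k] g2 j) := by
  rw [LinearMap.convMul_apply, comul_tensor hh hg]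
  simp

lemma conv3_tensor_apply (F G K : WithConv (H ⊗[k] H →ₗ[k] B)) {h g : H} {n m : ℕ}
    {h1 h2 h3 : Fin n → H} {g1 g2 g3 : Fin m → H}
    (hh : IsRep3 k H h h1 h2 h3) (hg : IsRep3 k H g g1 g2 g3) :
    (F * G * K) (h ⊗ₜ[k] g) = ∑ i, ∑ j,
      F (h1 i ⊗ₜ[k] g1 j) * G (h2 i ⊗ₜ[k] g2 j) * K (h3 i ⊗ₜ[k] g3 j) := by
  refine (LinearMap.congr_fun (conv3_eq F G K) (h ⊗ₜ[k] g)).trans ?_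
  rw [LinearMap.comp_apply, isRep3_tensor hh hg]
  simp

/-- Freezing the legs of the second tensor factor writes a threefold convolution product on
`H ⊗ H` as a sum of threefold convolution products on `H`. -/
lemma sum_conv3_frozen (F G K : H →ₗ[k] H →ₗ[k] B) {g : H} {m : ℕ} {g1 g2 g3 : Fin m → H}
    (hg : IsRep3 k H g g1 g2 g3) {T : H →ₗ[k] H →ₗ[k] B} (hT : bil F * bil G * bil K = bil T) :
    ∑ j, toConv (F.flip (g1 j)) * toConv (G.flip (g2 j)) * toConv (K.flip (g3 j))
      = toConv (T.flip g) := by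
  ext x
  obtain ⟨n, x1, x2, x3, hx⟩ := exists_isRep3 (k := k) x
  have h1 := conv3_tensor_apply (bil F) (bil G) (bil K) hx hg
  rw [hT, bil_tmul] at h1
  rw [ofConv_sum, LinearMap.sum_apply]
  refine Eq.trans ?_ h1.symm
  rw [Finset.sum_comm]
  exact Finset.sum_congr rfl fun j _ => conv3_apply _ _ _ hx

/-! ### Cocycle data in convolution form -/

/-- The bilinear map `(x, y) ↦ (xy) ▷ d`. -/
def actMul (act : H →ₗ[k] B →ₗ[k] B) (d : B) : H →ₗ[k] H →ₗ[k] B :=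
  (LinearMap.mul k H).compr₂ (act.flip d)

@[simp] lemma actMul_apply (act : H →ₗ[k] B →ₗ[k] B) (d : B) (x y : H) :
    actMul act d x y = act (x * y) d := rfl

variable {act : H →ₗ[k] B →ₗ[k] B} {σ σi : H →ₗ[k] H →ₗ[k] B}

lemma CocycleDatum.sigma_mul_inv (hcd : CocycleDatum k H B act σ σi) : bil σ * bil σi = 1 := by
  refine conv_tensor_ext fun x y => ?_
  obtain ⟨n, x1, x2, hx⟩ := exists_isRep2 (k := k) x
  obtain ⟨m, y1, y2, hy⟩ := exists_isRep2 (k := k) y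
  rw [conv2_tensor_apply _ _ hx hy]
  simp only [bil_tmul]
  rw [hcd.conv_left x y x1 x2 y1 y2 hx hy, LinearMap.convOne_apply, TensorProduct.counit_tmul,
    Algebra.algebraMap_eq_smul_one, smul_eq_mul, mul_comm]

lemma CocycleDatum.inv_mul_sigma (hcd : CocycleDatum k H B act σ σi) : bil σi * bil σ = 1 := by
  refine conv_tensor_ext fun x y => ?_
  obtain ⟨n, x1, x2, hx⟩ := exists_isRep2 (k := k) x
  obtain ⟨m, y1, y2, hy⟩ := exists_isRep2 (k := k) y
  rw [conv2_tensor_apply _ _ hx hy]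
  simp only [bil_tmul]
  rw [hcd.conv_right x y x1 x2 y1 y2 hx hy, LinearMap.convOne_apply, TensorProduct.counit_tmul,
    Algebra.algebraMap_eq_smul_one, smul_eq_mul, mul_comm]

/-- For a datum of associative type, `σ` commutes with `x ⊗ y ↦ (xy) ▷ d` under convolution. -/
lemma CocycleDatum.actMul_comm_sigma (hcd : CocycleDatum k H B act σ σi)
    (hassoc : ∀ (h g : H) (b : B), act h (act g b) = act (h * g) b) (d : B) :
    bil (actMul act d) * bil σ = bil σ * bil (actMul act d) := by
  have h1 : bil (actMul act d) = bil σ * bil (actMul act d) * bil σi := by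
    refine conv_tensor_ext fun x y => ?_
    obtain ⟨n, x1, x2, x3, hx⟩ := exists_isRep3 (k := k) x
    obtain ⟨m, y1, y2, y3, hy⟩ := exists_isRep3 (k := k) y
    rw [conv3_tensor_apply _ _ _ hx hy]
    simp only [bil_tmul, actMul_apply]
    rw [← hassoc]
    exact hcd.act_act x y d x1 x2 x3 y1 y2 y3 hx hy
  calc bil (actMul act d) * bil σ
      = bil σ * bil (actMul act d) * (bil σi * bil σ) := by
        conv_lhs => rw [h1]
        rw [mul_assoc]
    _ = bil σ * bil (actMul act d) := by rw [hcd.inv_mul_sigma, mul_one]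

/-- The bilinear map `(x, y) ↦ x ▷ σ(y, f)`. -/
def actSigma (act : H →ₗ[k] B →ₗ[k] B) (σ : H →ₗ[k] H →ₗ[k] B) (f : H) : H →ₗ[k] H →ₗ[k] B :=
  (act.flip ∘ₗ σ.flip f).flip

/-- The bilinear map `(x, y) ↦ σ(x, yf)`. -/
def sigmaMulRight (σ : H →ₗ[k] H →ₗ[k] B) (f : H) : H →ₗ[k] H →ₗ[k] B :=
  σ.compl₂ (LinearMap.mulRight k f)

/-- The bilinear map `(x, y) ↦ σ(xy, f)`. -/
def sigmaMulLeft (σ : H →ₗ[k] H →ₗ[k] B) (f : H) : H →ₗ[k] H →ₗ[k] B :=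
  (LinearMap.mul k H).compr₂ (σ.flip f)

/-- The cocycle identity in convolution form, the legs of `f` being parameters. -/
lemma CocycleDatum.sum_conv_eq (hcd : CocycleDatum k H B act σ σi) {f : H} {p : ℕ}
    {fa fb : Fin p → H} (hf : IsRep2 k H f fa fb) :
    ∑ l, bil (actSigma act σ (fa l)) * bil (sigmaMulRight σ (fb l))
      = bil σ * bil (sigmaMulLeft σ f) := by
  refine conv_tensor_ext fun x y => ?_
  obtain ⟨n, x1, x2, hx⟩ := exists_isRep2 (k := k) x
  obtain ⟨m, y1, y2, hy⟩ := exists_isRep2 (k := k) y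
  have h1 := hcd.cocycle x y f x1 x2 y1 y2 fa fb hx hy hf
  rw [conv2_tensor_apply _ _ hx hy]
  refine Eq.trans ?_ h1
  rw [ofConv_sum, LinearMap.sum_apply,
    Finset.sum_congr rfl fun l _ => conv2_tensor_apply _ _ hx hy, Finset.sum_comm]
  exact Finset.sum_congr rfl fun i _ => Finset.sum_comm

/-- If `s` and `t` cancel under convolution, they cancel inside the fivefold Sweedler product
expressing the convolution product of `σ̃` and its inverse. -/
lemma sum_cancel (act : H →ₗ[k] B →ₗ[k] B) {s t : H →ₗ[k] H →ₗ[k] B} (hst : bil s * bil t = 1)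
    (b b' c c' : B) (h g : H) {n n' m : ℕ}
    (h1 h2 h3 h4 h5 : Fin n → H) (ha hb hc : Fin n' → H) (g1 g2 g3 : Fin m → H)
    (hr5 : IsRep5 k H h h1 h2 h3 h4 h5) (hr3 : IsRep3 k H h ha hb hc)
    (hg : IsRep3 k H g g1 g2 g3) :
    ∑ i, ∑ j, b * act (h1 i) c * s (h2 i) (g1 j) * t (h3 i) (g2 j)
        * act (h4 i * g3 j) c' * act (h5 i) b'
      = ∑ i, b * act (ha i) c * act (hb i * g) c' * act (hc i) b' := by
  let P : WithConv (H →ₗ[k] B) := toConv (LinearMap.mulLeft k b ∘ₗ act.flip c)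
  let Q : WithConv (H →ₗ[k] B) := toConv (act.flip b')
  have hmid := sum_conv3_frozen s t (actMul act c') hg (T := actMul act c') (by rw [hst, one_mul])
  calc _ = ∑ j, (P * toConv (s.flip (g1 j)) * toConv (t.flip (g2 j))
            * toConv ((actMul act c').flip (g3 j)) * Q) h := by
        rw [Finset.sum_comm]
        exact Finset.sum_congr rfl fun j _ => (conv5_apply P (toConv (s.flip (g1 j)))
          (toConv (t.flip (g2 j))) (toConv ((actMul act c').flip (g3 j))) Q hr5).symm
    _ = (P * (∑ j, toConv (s.flip (g1 j)) * toConv (t.flip (g2 j))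
            * toConv ((actMul act c').flip (g3 j))) * Q) h := by
        rw [Finset.mul_sum, Finset.sum_mul, ofConv_sum, LinearMap.sum_apply]
        simp only [mul_assoc]
    _ = _ := by
        rw [hmid]
        exact conv3_apply P (toConv ((actMul act c').flip g)) Q hr3

end ConvolutionHelpers

section Statements

variable {k : Type*} [Field k]
variable {H : Type*} [Ring H] [HopfAlgebra k H]
variable {B : Type*} [Ring B] [Algebra k B]

/-- Lemma 3.10 (key identities): for a cocycle datum of associative type,
the 2-cocycle condition for `σ̃` on `B^e # H` and the convolution-inverse property
of `σ̃⁻¹` hold. -/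
theorem statement14 (act : H →ₗ[k] B →ₗ[k] B) (σ σi : H →ₗ[k] H →ₗ[k] B)
    (hcd : CocycleDatum k H B act σ σi)
    (hassoc : ∀ (h g : H) (b : B), act h (act g b) = act (h * g) b) :
    -- (i) (h₍₁₎▷((g₍₁₎▷d)σ(g₍₂₎,f₍₁₎)))σ(h₍₂₎,g₍₃₎f₍₂₎) = σ(h₍₁₎,g₍₁₎)((h₍₂₎g₍₂₎)▷d)σ(h₍₃₎g₍₃₎,f)
    (∀ (h g f : H) (d : B) {n n' m p : ℕ}
        (ha hb : Fin n → H) (h1 h2 h3 : Fin n' → H)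
        (g1 g2 g3 : Fin m → H) (fa fb : Fin p → H),
      IsRep2 k H h ha hb → IsRep3 k H h h1 h2 h3 →
      IsRep3 k H g g1 g2 g3 → IsRep2 k H f fa fb →
      ∑ i, ∑ j, ∑ l, act (ha i) (act (g1 j) d * σ (g2 j) (fa l)) * σ (hb i) (g3 j * fb l)
        = ∑ i, ∑ j, σ (h1 i) (g1 j) * act (h2 i * g2 j) d * σ (h3 i * g3 j) f)
    ∧
    -- (ii) b(h₍₁₎▷c)σ⁻¹(h₍₂₎,g₍₁₎)σ(h₍₃₎,g₍₂₎)((h₍₄₎g₍₃₎)▷c')(h₍₅₎▷b')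
    --        = b(h₍₁₎▷c)((h₍₂₎g)▷c')(h₍₃₎▷b')
    (∀ (b b' c c' : B) (h g : H) {n n' m : ℕ}
        (h1 h2 h3 h4 h5 : Fin n → H) (ha hb hc : Fin n' → H) (g1 g2 g3 : Fin m → H),
      IsRep5 k H h h1 h2 h3 h4 h5 → IsRep3 k H h ha hb hc → IsRep3 k H g g1 g2 g3 →
      ∑ i, ∑ j, b * act (h1 i) c * σi (h2 i) (g1 j) * σ (h3 i) (g2 j)
          * act (h4 i * g3 j) c' * act (h5 i) b'
        = ∑ i, b * act (ha i) c * act (hb i * g) c' * act (hc i) b')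
    ∧
    -- (ii') the same identity with σ and σ⁻¹ interchanged
    (∀ (b b' c c' : B) (h g : H) {n n' m : ℕ}
        (h1 h2 h3 h4 h5 : Fin n → H) (ha hb hc : Fin n' → H) (g1 g2 g3 : Fin m → H),
      IsRep5 k H h h1 h2 h3 h4 h5 → IsRep3 k H h ha hb hc → IsRep3 k H g g1 g2 g3 →
      ∑ i, ∑ j, b * act (h1 i) c * σ (h2 i) (g1 j) * σi (h3 i) (g2 j)
          * act (h4 i * g3 j) c' * act (h5 i) b'
        = ∑ i, b * act (ha i) c * act (hb i * g) c' * act (hc i) b') := by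
  refine ⟨?_, fun b b' c c' h g => sum_cancel act hcd.inv_mul_sigma b b' c c' h g,
    fun b b' c c' h g => sum_cancel act hcd.sigma_mul_inv b b' c c' h g⟩
  intro h g f d n n' m p ha hb h1 h2 h3 g1 g2 g3 fa fb hh2 hh3 hg hf
  -- Measuring: `x ↦ x ▷ (uv)` is the convolution product of `x ↦ x ▷ u` and `x ↦ x ▷ v`.
  have hmeas : ∀ u v : B, WithConv.toConv (act.flip (u * v))
      = WithConv.toConv (act.flip u) * WithConv.toConv (act.flip v) := by
    intro u v
    ext x
    obtain ⟨N, x1, x2, hx⟩ := exists_isRep2 (k := k) x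
    exact (hcd.toMeasuring.act_mul x u v x1 x2 hx).trans (conv2_apply
      (WithConv.toConv (act.flip u)) (WithConv.toConv (act.flip v)) hx).symm
  -- Fixing the legs of `g` and `f`, this resolves the nested action into the three legs of `h`.
  have hstep : ∀ j l, ∑ i, act (ha i) (act (g1 j) d * σ (g2 j) (fa l)) * σ (hb i) (g3 j * fb l)
      = ∑ i, act (h1 i * g1 j) d * act (h2 i) (σ (g2 j) (fa l)) * σ (h3 i) (g3 j * fb l) := by
    intro j l
    have e1 := conv2_apply (WithConv.toConv (act.flip (act (g1 j) d * σ (g2 j) (fa l))))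
      (WithConv.toConv (σ.flip (g3 j * fb l))) hh2
    have e2 := conv3_apply (WithConv.toConv (act.flip (act (g1 j) d)))
      (WithConv.toConv (act.flip (σ (g2 j) (fa l)))) (WithConv.toConv (σ.flip (g3 j * fb l))) hh3
    rw [← hmeas] at e2
    simp only [← hassoc]
    exact e1.symm.trans e2
  calc _ = ∑ l, ∑ i, ∑ j,
          act (h1 i * g1 j) d * act (h2 i) (σ (g2 j) (fa l)) * σ (h3 i) (g3 j * fb l) := by
        rw [Finset.sum_congr rfl fun i _ => Finset.sum_comm, Finset.sum_comm]
        refine Finset.sum_congr rfl fun l _ => ?_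
        rw [Finset.sum_comm, Finset.sum_congr rfl fun j _ => hstep j l, Finset.sum_comm]
    _ = ∑ l, (bil (actMul act d) * bil (actSigma act σ (fa l))
          * bil (sigmaMulRight σ (fb l))) (h ⊗ₜ[k] g) :=
        Finset.sum_congr rfl fun l _ => (conv3_tensor_apply (bil (actMul act d))
          (bil (actSigma act σ (fa l))) (bil (sigmaMulRight σ (fb l))) hh3 hg).symm
    _ = (bil (actMul act d) * ∑ l, bil (actSigma act σ (fa l))
          * bil (sigmaMulRight σ (fb l))) (h ⊗ₜ[k] g) := by
        rw [Finset.mul_sum, WithConv.ofConv_sum, LinearMap.sum_apply]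
        simp only [mul_assoc]
    _ = (bil σ * bil (actMul act d) * bil (sigmaMulLeft σ f)) (h ⊗ₜ[k] g) := by
        rw [hcd.sum_conv_eq hf, ← mul_assoc, hcd.actMul_comm_sigma hassoc]
    _ = _ := conv3_tensor_apply (bil σ) (bil (actMul act d)) (bil (sigmaMulLeft σ f)) hh3 hg

end Statements
end
end
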